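/- A graph G is a minimal well-indumatched graph of girth at least 9 (i.e., G is well-indumatched of girth at least 9 and no proper subgraph of G is well-indumatched of girth at least 9) if and only if either G is the cycle C_11, or G is a reduced unicyclic graph of even girth g ≥ 10 with unique cycle C = v1 v2 ... vg v1 such that the rooted trees T_{v_i} are alternately of Type (i) and of Type (ii) around the cycle. -/

import Mathlib

open SimpleGraph

/-- `M` is an induced matching of `G`: a set of edges of `G` such that no two distinct
edges of `M` share an endpoint or have endpoints joined by an edge of `G`. -/
def IsInducedMatching {V : Type*} (G : SimpleGraph V) (M : Set (Sym2 V)) : Prop :=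
  M ⊆ G.edgeSet ∧
    ∀ e ∈ M, ∀ f ∈ M, e ≠ f → ∀ u ∈ e, ∀ v ∈ f, u ≠ v ∧ ¬ G.Adj u v

/-- `M` is a maximal induced matching of `G`. -/
def IsMaximalInducedMatching {V : Type*} (G : SimpleGraph V) (M : Set (Sym2 V)) : Prop :=
  IsInducedMatching G M ∧
    ∀ N : Set (Sym2 V), IsInducedMatching G N → M ⊆ N → N = M

/-- `G` is well-indumatched: all of its maximal induced matchings have the same size. -/
def WellIndumatched {V : Type*} (G : SimpleGraph V) : Prop :=
  ∀ M N : Set (Sym2 V), IsMaximalInducedMatching G M → IsMaximalInducedMatching G N →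
    M.ncard = N.ncard

/-- A graph is reduced if no two distinct vertices have the same open neighborhood. -/
def Reduced {V : Type*} (G : SimpleGraph V) : Prop :=
  ∀ x y : V, G.neighborSet x = G.neighborSet y → x = y

/-- The component of `v` in `H` is of Type (i): it consists of the single vertex `v`. -/
def TypeI {V : Type*} (H : SimpleGraph V) (v : V) : Prop :=
  (H.connectedComponentMk v).supp = {v}

/-- The component of `v` in `H` is of Type (ii): it is a path of length `2` having `v`
as an endpoint. -/
def TypeII {V : Type*} (H : SimpleGraph V) (v : V) : Prop :=
  ∃ x y : V, x ≠ y ∧ v ≠ x ∧ v ≠ y ∧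
    (H.connectedComponentMk v).supp = {v, x, y} ∧
    H.Adj v x ∧ H.Adj x y ∧ ¬ H.Adj v y

/-!
Fix an induced matching of a well-indumatched graph; the vertices far from all of its edges induce a
well-indumatched graph again. In a minimal graph such a proper induced subgraph is acyclic, so no
edge is far from a shortest cycle, the *rim*, and the trees attached to the rim have height at most
two. Whether two edges conflict is then determined by their positions along the rim, and an induced
matching cannot lose a few edges and gain a different number of edges covering the same conflicts.
Such exchanges show that an edge at distance one from the rim, a *tip*, forces tips at every second
rim vertex, so that the rim and these rays form a spanning *sun*, and that without tips the rim has
exactly eleven vertices.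

Conversely, a maximal induced matching of a sun contains exactly one edge in conflict with the tip
of each ray, which determines its size, and all cycles in a sun or in `C₁₁` have the same length. A
minimal graph contained in one of them thus has the same girth, so by the classification above it
is isomorphic to the whole graph.
-/

section

variable {V W : Type*} {F : SimpleGraph W} {G : SimpleGraph V}

/-! ### Conflicting edges -/

/-- Two edges conflict if they share an endpoint or are joined by an edge; an induced matching is a
set of pairwise non-conflicting edges. Every edge conflicts with itself. -/
def Conflict (G : SimpleGraph V) (e f : Sym2 V) : Prop :=
  ∃ u ∈ e, ∃ v ∈ f, u = v ∨ G.Adj u v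

lemma Conflict.refl (G : SimpleGraph V) (e : Sym2 V) : Conflict G e e :=
  ⟨_, e.out_fst_mem, _, e.out_fst_mem, .inl rfl⟩

lemma Conflict.symm {e f : Sym2 V} : Conflict G e f → Conflict G f e :=
  fun ⟨u, hu, v, hv, h⟩ => ⟨v, hv, u, hu, h.imp Eq.symm Adj.symm⟩

lemma conflict_map_iff (φ : F ↪g G) (e f : Sym2 W) :
    Conflict G (e.map φ) (f.map φ) ↔ Conflict F e f := by
  simp only [Conflict, Sym2.mem_map, exists_exists_and_eq_and, φ.injective.eq_iff, φ.map_adj_iff]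

lemma isInducedMatching_iff {M : Set (Sym2 V)} :
    IsInducedMatching G M ↔
      M ⊆ G.edgeSet ∧ ∀ e ∈ M, ∀ f ∈ M, Conflict G e f → e = f := by
  simp only [IsInducedMatching, Conflict]
  refine and_congr_right fun _ => forall₄_congr fun e _ f _ => ?_
  rw [ne_eq, ← not_imp_not]
  push Not
  simp only [or_iff_not_imp_left, ne_eq]

lemma isMaximalInducedMatching_iff {M : Set (Sym2 V)} :
    IsMaximalInducedMatching G M ↔
      IsInducedMatching G M ∧ ∀ e ∈ G.edgeSet, ∃ f ∈ M, Conflict G e f := by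
  refine and_congr_right fun hM => ⟨fun hmax e he => ?_, fun hdom N hN hMN => ?_⟩
  · obtain ⟨hME, hMc⟩ := isInducedMatching_iff.1 hM
    by_contra! hfree
    have hins : IsInducedMatching G (insert e M) := by
      refine isInducedMatching_iff.2 ⟨Set.insert_subset he hME, ?_⟩
      rintro a (rfl | ha) b (rfl | hb) hab
      · rfl
      · exact (hfree b hb hab).elim
      · exact (hfree a ha hab.symm).elim
      · exact hMc a ha b hb hab
    have heM : e ∈ M := hmax _ hins (Set.subset_insert e M) ▸ Set.mem_insert e M
    exact hfree e heM (Conflict.refl G e)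
  · obtain ⟨hNE, hNc⟩ := isInducedMatching_iff.1 hN
    refine Set.Subset.antisymm (fun e he => ?_) hMN
    obtain ⟨f, hf, hef⟩ := hdom e (hNE he)
    exact hNc e he f (hMN hf) hef ▸ hf

lemma IsInducedMatching.exists_maximal [Finite V] {M : Set (Sym2 V)}
    (hM : IsInducedMatching G M) : ∃ N, M ⊆ N ∧ IsMaximalInducedMatching G N := by
  obtain ⟨N, hMN, hN⟩ := Finite.exists_le_maximal (p := IsInducedMatching G) hM
  exact ⟨N, hMN, hN.1, fun K hK hNK => Set.Subset.antisymm (hN.2 hK hNK) hNK⟩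

-- In a maximal induced matching containing `P`, the edges of `P` may be replaced by those of `Q`.
lemma WellIndumatched.ncard_le_of_dominated [Finite V] (hG : WellIndumatched G)
    {P Q : Set (Sym2 V)} (hP : IsInducedMatching G P) (hQ : IsInducedMatching G Q)
    (hdom : ∀ e ∈ G.edgeSet, (∃ q ∈ Q, Conflict G e q) → ∃ p ∈ P, Conflict G e p) :
    Q.ncard ≤ P.ncard := by
  obtain ⟨M, hPM, hM⟩ := hP.exists_maximal
  obtain ⟨hME, hMc⟩ := isInducedMatching_iff.1 hM.1
  obtain ⟨hQE, hQc⟩ := isInducedMatching_iff.1 hQ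
  have hfar : ∀ s ∈ M \ P, ∀ q ∈ Q, ¬ Conflict G s q := by
    rintro s ⟨hs, hsP⟩ q hq hsq
    obtain ⟨p, hp, hsp⟩ := hdom s (hME hs) ⟨q, hq, hsq⟩
    exact hsP (hMc s hs p (hPM hp) hsp ▸ hp)
  have hU : IsInducedMatching G (Q ∪ M \ P) := by
    refine isInducedMatching_iff.2 ⟨Set.union_subset hQE (Set.sdiff_subset.trans hME), ?_⟩
    rintro a (ha | ha) b (hb | hb) hab
    · exact hQc a ha b hb hab
    · exact (hfar b hb a ha hab.symm).elim
    · exact (hfar a ha b hb hab).elim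
    · exact hMc a ha.1 b hb.1 hab
  have hdisj : Disjoint Q (M \ P) :=
    Set.disjoint_left.2 fun a ha hb => hfar a hb a ha (Conflict.refl G a)
  obtain ⟨N, hUN, hN⟩ := hU.exists_maximal
  have := Set.ncard_union_eq hdisj
  have := Set.ncard_sdiff_add_ncard_of_subset hPM
  have := Set.ncard_le_ncard hUN
  have := hG M N hM hN
  omega

section Embedding

variable (φ : F ↪g G) {M₀ : Set (Sym2 V)} (hM₀ : IsInducedMatching G M₀)
  (hfar : ∀ f ∈ F.edgeSet, ∀ m ∈ M₀, ¬ Conflict G (f.map φ) m)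
  (hcov : ∀ e ∈ G.edgeSet, (∃ m ∈ M₀, Conflict G e m) ∨ ∃ f ∈ F.edgeSet, f.map φ = e)

include hM₀ hfar hcov

lemma IsMaximalInducedMatching.union_image {M : Set (Sym2 W)}
    (hM : IsMaximalInducedMatching F M) :
    IsMaximalInducedMatching G (M₀ ∪ Sym2.map φ '' M) := by
  obtain ⟨hMind, hMdom⟩ := isMaximalInducedMatching_iff.1 hM
  obtain ⟨hME, hMc⟩ := isInducedMatching_iff.1 hMind
  obtain ⟨hM₀E, hM₀c⟩ := isInducedMatching_iff.1 hM₀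
  refine isMaximalInducedMatching_iff.2 ⟨isInducedMatching_iff.2 ⟨?_, ?_⟩, fun e he => ?_⟩
  · rintro e (he | ⟨f, hf, rfl⟩)
    · exact hM₀E he
    · exact φ.map_mem_edgeSet_iff.2 (hME hf)
  · rintro a (ha | ⟨a, ha, rfl⟩) b (hb | ⟨b, hb, rfl⟩) hab
    · exact hM₀c a ha b hb hab
    · exact (hfar b (hME hb) a ha hab.symm).elim
    · exact (hfar a (hME ha) b hb hab).elim
    · rw [hMc a ha b hb ((conflict_map_iff φ a b).1 hab)]
  · rcases hcov e he with ⟨m, hm, hem⟩ | ⟨f, hf, rfl⟩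
    · exact ⟨m, .inl hm, hem⟩
    · obtain ⟨g, hg, hfg⟩ := hMdom f hf
      exact ⟨g.map φ, .inr ⟨g, hg, rfl⟩, (conflict_map_iff φ f g).2 hfg⟩

lemma WellIndumatched.of_embedding [Finite V] (hG : WellIndumatched G) : WellIndumatched F := by
  have hcard (M) (hM : IsMaximalInducedMatching F M) :
      (M₀ ∪ Sym2.map φ '' M).ncard = M₀.ncard + M.ncard := by
    rw [Set.ncard_union_eq, Set.ncard_image_of_injective _ (Sym2.map.injective φ.injective)]
    rw [Set.disjoint_left]
    rintro _ ha ⟨f, hf, rfl⟩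
    exact hfar f (hM.1.1 hf) _ ha (Conflict.refl G _)
  intro M N hM hN
  have := hG _ _ (hM.union_image φ hM₀ hfar hcov) (hN.union_image φ hM₀ hfar hcov)
  rw [hcard M hM, hcard N hN] at this
  omega

end Embedding

lemma isInducedMatching_empty (G : SimpleGraph V) : IsInducedMatching G ∅ := by
  simp [isInducedMatching_iff]

lemma isInducedMatching_singleton {e : Sym2 V} (he : e ∈ G.edgeSet) : IsInducedMatching G {e} := by
  simp [isInducedMatching_iff, he]

lemma WellIndumatched.of_iso [Finite V] (φ : F ≃g G) (hG : WellIndumatched G) :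
    WellIndumatched F := by
  refine hG.of_embedding φ.toEmbedding (isInducedMatching_empty G) (by simp) fun e he => .inr ?_
  obtain ⟨⟨f, hf⟩, hfe⟩ := φ.mapEdgeSet.surjective ⟨e, he⟩
  exact ⟨f, hf, congrArg Subtype.val hfe⟩

lemma WellIndumatched.induce_far [Finite V] (hG : WellIndumatched G) {M : Set (Sym2 V)}
    (hM : IsInducedMatching G M) :
    WellIndumatched (G.induce {v | ∀ e ∈ M, ∀ w ∈ e, ¬ (v = w ∨ G.Adj v w)}) := by
  refine hG.of_embedding (Embedding.induce _) hM ?_ ?_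
  · rintro f - m hm ⟨u, hu, v, hv, huv⟩
    obtain ⟨u, -, rfl⟩ := Sym2.mem_map.1 hu
    exact u.2 m hm v hv huv
  · rintro ⟨x, y⟩ he
    by_contra! hc
    obtain ⟨hfree, hout⟩ := hc
    have hx : ∀ e ∈ M, ∀ w ∈ e, ¬ (x = w ∨ G.Adj x w) := fun e hM w hw h =>
      hfree e hM ⟨x, Sym2.mem_mk_left x y, w, hw, h⟩
    have hy : ∀ e ∈ M, ∀ w ∈ e, ¬ (y = w ∨ G.Adj y w) := fun e hM w hw h =>
      hfree e hM ⟨y, Sym2.mem_mk_right x y, w, hw, h⟩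
    exact hout s(⟨x, hx⟩, ⟨y, hy⟩) he rfl

/-! ### Minimality -/

/-- `G` is well-indumatched of girth at least `9`, and no proper subgraph of it is. -/
def IsMinimalWellIndumatched (G : SimpleGraph V) : Prop :=
  WellIndumatched G ∧ 9 ≤ G.girth ∧
    ∀ H : G.Subgraph, H ≠ ⊤ → ¬ (WellIndumatched H.coe ∧ 9 ≤ H.coe.girth)

lemma not_isAcyclic_of_le_girth {n : ℕ} (hn : n ≠ 0) (hG : n ≤ G.girth) : ¬ G.IsAcyclic := by
  rw [← girth_eq_zero]
  omega

namespace IsMinimalWellIndumatched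

variable [Finite V] (hG : IsMinimalWellIndumatched G)
include hG

lemma toSubgraph_eq_top (φ : Copy F G) (hF : WellIndumatched F) (hc : ¬ F.IsAcyclic) :
    φ.toSubgraph = ⊤ := by
  have : Finite W := Finite.of_injective φ φ.injective
  by_contra hne
  refine hG.2.2 _ hne ⟨hF.of_iso φ.isoToSubgraph.symm, ?_⟩
  rw [← φ.isoToSubgraph.girth_eq]
  exact hG.2.1.trans (IsContained.girth_le ⟨φ⟩ hc)

lemma nonempty_iso (φ : Copy F G) (hF : WellIndumatched F) (hc : ¬ F.IsAcyclic) :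
    Nonempty (F ≃g G) := by
  have h := φ.isoToSubgraph
  rw [hG.toSubgraph_eq_top φ hF hc] at h
  exact ⟨h.trans Subgraph.topIso⟩

lemma isAcyclic_induce_far {e : Sym2 V} (he : e ∈ G.edgeSet) :
    (G.induce {v | ∀ w ∈ e, ¬ (v = w ∨ G.Adj v w)}).IsAcyclic := by
  by_contra hc
  set S : Set V := {v | ∀ w ∈ e, ¬ (v = w ∨ G.Adj v w)}
  have hS : {v | ∀ f ∈ ({e} : Set (Sym2 V)), ∀ w ∈ f, ¬ (v = w ∨ G.Adj v w)} = S := by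
    simp only [Set.mem_singleton_iff, forall_eq, S]
  have hwi : WellIndumatched (G.induce S) :=
    hS ▸ hG.1.induce_far (isInducedMatching_singleton he)
  have htop := hG.toSubgraph_eq_top (Embedding.induce S).toCopy hwi hc
  have hmem : e.out.1 ∈ (Embedding.induce (G := G) S).toCopy.toSubgraph.verts := by
    rw [htop]; trivial
  obtain ⟨v, -, hv⟩ := hmem
  exact v.2 _ e.out_fst_mem (.inl hv)

end IsMinimalWellIndumatched

/-! ### Cyclic coordinates -/

/-- `c` runs periodically around a cycle of length `n` in `G`. Indexing the cycle by `ℤ` rather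
than `ZMod n` leaves all position arithmetic to linear integer arithmetic. -/
structure IsRim (G : SimpleGraph V) (n : ℕ) (c : ℤ → V) : Prop where
  three_le : 3 ≤ n
  eq_iff : ∀ i j, c i = c j ↔ i ≡ j [ZMOD n]
  adj : ∀ i, G.Adj (c i) (c (i + 1))

/-- The vertices of a closed walk, extended periodically to integer positions. -/
def cyclicGetVert {v : V} (C : G.Walk v v) (i : ℤ) : V :=
  C.getVert (i % C.length).toNat

lemma cyclicGetVert_natCast {v : V} (C : G.Walk v v) {i : ℕ} (hi : i ≤ C.length) :
    cyclicGetVert C i = C.getVert i := by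
  rcases hi.lt_or_eq with hlt | rfl
  · rw [cyclicGetVert, Int.emod_eq_of_lt (by omega) (by omega), Int.toNat_natCast]
  · simp [cyclicGetVert]

lemma cyclicGetVert_congr {v : V} (C : G.Walk v v) {i j : ℤ} (h : i ≡ j [ZMOD C.length]) :
    cyclicGetVert C i = cyclicGetVert C j := by
  rw [cyclicGetVert, cyclicGetVert, h]

lemma exists_natCast_modEq {n : ℕ} (hn : n ≠ 0) (i : ℤ) :
    ∃ m : ℕ, m < n ∧ (m : ℤ) ≡ i [ZMOD n] := by
  obtain ⟨z, hz0, hzn, hz⟩ := Int.existsUnique_equiv i (b := n) (by omega)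
  lift z to ℕ using hz0
  exact ⟨z, by omega, hz⟩

lemma isRim_cyclicGetVert {v : V} {C : G.Walk v v} (hC : C.IsCycle) :
    IsRim G C.length (cyclicGetVert C) where
  three_le := hC.three_le_length
  eq_iff i j := by
    have h0 : C.length ≠ 0 := by have := hC.three_le_length; omega
    refine ⟨fun hij => ?_, cyclicGetVert_congr C⟩
    obtain ⟨a, ha, hai⟩ := exists_natCast_modEq h0 i
    obtain ⟨b, hb, hbj⟩ := exists_natCast_modEq h0 j
    rw [← cyclicGetVert_congr C hai, ← cyclicGetVert_congr C hbj,
      cyclicGetVert_natCast C ha.le, cyclicGetVert_natCast C hb.le] at hij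
    obtain rfl : a = b := hC.getVert_injOn' (Nat.le_sub_one_of_lt ha) (Nat.le_sub_one_of_lt hb) hij
    exact hai.symm.trans hbj
  adj i := by
    have h0 : C.length ≠ 0 := by have := hC.three_le_length; omega
    obtain ⟨a, ha, hai⟩ := exists_natCast_modEq h0 i
    rw [← cyclicGetVert_congr C hai, ← cyclicGetVert_congr C (hai.add_right 1),
      cyclicGetVert_natCast C ha.le]
    exact_mod_cast cyclicGetVert_natCast C (i := a + 1) ha ▸ C.adj_getVert_succ ha

lemma girth_le_length_add_length {u v : V} {p q : G.Walk u v} (hp : p.IsPath) (hq : q.IsPath)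
    (hne : p ≠ q) : G.girth ≤ p.length + q.length := by
  obtain ⟨w, -, -, C, hC, hle⟩ := hp.exists_isCycle_length_le_add_of_ne hq hne
  exact (girth_le_length hC).trans hle

namespace IsRim

variable {n : ℕ} {c : ℤ → V} (h : IsRim G n c)
include h

lemma add_period (i : ℤ) : c (i + n) = c i := (h.eq_iff _ _).2 (by simp [Int.ModEq])

lemma eq_of_lt {i j : ℤ} (hij : c i = c j) (h₁ : i < j + n) (h₂ : j < i + n) : i = j := by
  have := Int.eq_zero_of_abs_lt_dvd ((h.eq_iff i j).1 hij).dvd (abs_lt.2 ⟨by omega, by omega⟩)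
  omega

lemma adj_sub_one (i : ℤ) : G.Adj (c i) (c (i - 1)) := by
  simpa using (h.adj (i - 1)).symm

lemma exists_eq_of_mem_Ico (i j : ℤ) : ∃ k, i ≤ k ∧ k < i + n ∧ c k = c j := by
  obtain ⟨z, hz0, hzn, hz⟩ :=
    Int.existsUnique_equiv (j - i) (b := n) (by have := h.three_le; omega)
  exact ⟨i + z, by omega, by omega, (h.eq_iff _ _).2 (by simpa using hz.add_left i)⟩

lemma shift (s : ℤ) : IsRim G n (fun i => c (s + i)) where
  three_le := h.three_le
  eq_iff i j := (h.eq_iff _ _).trans ⟨Int.ModEq.add_left_cancel' s, Int.ModEq.add_left s⟩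
  adj i := by simpa only [add_assoc] using h.adj (s + i)

lemma induce {S : Set V} (hS : ∀ i, c i ∈ S) :
    IsRim (G.induce S) n (fun i => ⟨c i, hS i⟩) where
  three_le := h.three_le
  eq_iff i j := Subtype.mk_eq_mk.trans (h.eq_iff i j)
  adj i := h.adj i

lemma exists_arc {i j : ℤ} (hij : i ≤ j) (hj : j < i + n) :
    ∃ p : G.Walk (c i) (c j), p.IsPath ∧ p.length = j - i ∧
      ∀ v ∈ p.support, ∃ k, i ≤ k ∧ k ≤ j ∧ v = c k := by
  induction j, hij using Int.leInduction with
  | base => exact ⟨.nil, .nil, by simp, by simpa using ⟨i, le_rfl, le_rfl, rfl⟩⟩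
  | succ j hij ih =>
    obtain ⟨p, hp, hlen, hsupp⟩ := ih (by omega)
    refine ⟨p.concat (h.adj j), hp.concat (fun hmem => ?_) _, by simp; omega, fun v hv => ?_⟩
    · obtain ⟨k, hik, hkj, hk⟩ := hsupp _ hmem
      have := h.eq_of_lt hk (by omega) (by omega)
      omega
    · rw [Walk.support_concat, List.mem_append, List.mem_singleton] at hv
      rcases hv with hv | rfl
      · obtain ⟨k, hik, hkj, hk⟩ := hsupp v hv
        exact ⟨k, hik, by omega, hk⟩
      · exact ⟨j + 1, by omega, le_rfl, rfl⟩

lemma exists_isCycle : ∃ v, ∃ C : G.Walk v v,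
    C.IsCycle ∧ C.length = n ∧ ∀ x ∈ C.support, x ∈ Set.range c := by
  have h3 := h.three_le
  obtain ⟨p, hp, hlen, hsupp⟩ := h.exists_arc (i := 0) (j := n - 1) (by omega) (by omega)
  have hadj : G.Adj (c (n - 1)) (c 0) :=
    (h.eq_iff 0 n).2 (by simp [Int.ModEq]) ▸ (h.adj_sub_one n).symm
  have hC : (Walk.cons hadj p).IsCycle := (Walk.cons_isCycle_iff p hadj).2 ⟨hp, fun hmem => by
    have := hp.length_eq_one_of_mem_edges (Sym2.eq_swap ▸ hmem)
    omega⟩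
  refine ⟨_, _, hC, by rw [Walk.length_cons]; omega, fun x hx => ?_⟩
  rw [Walk.support_cons, List.mem_cons] at hx
  rcases hx with rfl | hx
  · exact ⟨_, rfl⟩
  · obtain ⟨k, -, -, rfl⟩ := hsupp x hx
    exact ⟨k, rfl⟩

lemma not_isAcyclic : ¬ G.IsAcyclic := by
  intro hG
  obtain ⟨v, C, hC, -⟩ := h.exists_isCycle
  exact hG C hC

lemma exists_short_path (i j : ℤ) :
    ∃ p : G.Walk (c i) (c j), p.IsPath ∧ 2 * p.length ≤ n ∧ (∀ v ∈ p.support, v ∈ Set.range c) ∧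
      (p.length = 1 → c j = c (i + 1) ∨ c j = c (i - 1)) := by
  obtain ⟨k, hik, hkn, hk⟩ := h.exists_eq_of_mem_Ico i j
  rw [← hk]
  rcases le_total (2 * (k - i)) n with hle | hle
  · obtain ⟨p, hp, hlen, hsupp⟩ := h.exists_arc hik hkn
    refine ⟨p, hp, by omega, fun v hv => ?_, fun h1 => .inl (by congr 1; omega)⟩
    obtain ⟨m, -, -, rfl⟩ := hsupp v hv
    exact ⟨m, rfl⟩
  · have harc := h.exists_arc hkn.le (by have := h.three_le; omega)
    rw [h.add_period] at harc
    obtain ⟨p, hp, hlen, hsupp⟩ := harc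
    refine ⟨p.reverse, hp.reverse, by simp; omega, fun v hv => ?_, fun h1 => .inr ?_⟩
    · obtain ⟨m, -, -, rfl⟩ := hsupp v (by simpa using hv)
      exact ⟨m, rfl⟩
    · rw [Walk.length_reverse] at h1
      rw [← h.add_period (i - 1)]
      congr 1
      omega

section Girth

variable (hgirth : G.girth = n)
include hgirth

lemma eq_of_adj {i j : ℤ} (hij : G.Adj (c i) (c j)) : c j = c (i + 1) ∨ c j = c (i - 1) := by
  obtain ⟨p, hp, hlen, -, hnext⟩ := h.exists_short_path i j
  refine hnext ?_
  by_contra hone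
  have hle := girth_le_length_add_length hp (Path.singleton hij).2 (by
    intro heq
    exact hone (congrArg Walk.length heq))
  have : (Path.singleton hij).1.length = 1 := rfl
  have := h.three_le
  omega

/- Otherwise the path and a detour of length at most `1 + n / 2` along the rim would close up to a
cycle shorter than the girth. -/
lemma support_of_isPath (hn : 9 ≤ n) {i j : ℤ} {z : V} (hz : z ∉ Set.range c)
    (hiz : G.Adj (c i) z) {q : G.Walk z (c j)} (hq : q.IsPath) (hlen : q.length ≤ 3) :
    c i ∈ q.support ∧ ∀ x ∈ q.support, x ≠ z → x ∈ Set.range c := by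
  obtain ⟨p, hp, hp2, hsupp, -⟩ := h.exists_short_path i j
  have hzp : (Walk.cons hiz.symm p).IsPath := hp.cons fun hmem => hz (hsupp z hmem)
  obtain rfl : Walk.cons hiz.symm p = q := by
    by_contra hne
    have := girth_le_length_add_length hzp hq hne
    rw [Walk.length_cons] at this
    omega
  refine ⟨by simp, fun x hx hxz => ?_⟩
  rw [Walk.support_cons, List.mem_cons] at hx
  exact hsupp x (hx.resolve_left hxz)

end Girth

end IsRim

/-- A rim of length at least `9` whose adjacencies are only those along the cycle, and such that
all trees attached to it have height at most `2`. -/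
structure IsShallowRim (G : SimpleGraph V) (n : ℕ) (c : ℤ → V) : Prop extends IsRim G n c where
  nine_le : 9 ≤ n
  eq_of_adj : ∀ i j, G.Adj (c i) (c j) → c j = c (i + 1) ∨ c j = c (i - 1)
  leaf : ∀ i z w, z ∉ Set.range c → G.Adj (c i) z → G.Adj z w → w ≠ c i →
    w ∉ Set.range c ∧ ∀ t, G.Adj w t → t = z

/- An edge `wt` two steps away from a shortest cycle is far from the whole cycle, which minimality
forbids. -/
lemma IsMinimalWellIndumatched.eq_of_adj_of_adj [Finite V] (hG : IsMinimalWellIndumatched G)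
    {c : ℤ → V} (h : IsRim G G.girth c) {i : ℤ} {z w : V} (hz : z ∉ Set.range c)
    (hiz : G.Adj (c i) z) (hzw : G.Adj z w) (hw : w ∉ Set.range c) {t : V} (hwt : G.Adj w t) :
    t = z := by
  by_contra htz
  have hzc (j) : z ≠ c j := fun hj => hz ⟨j, hj.symm⟩
  have hwc (j) : w ≠ c j := fun hj => hw ⟨j, hj.symm⟩
  have hwadj (j) : ¬ G.Adj w (c j) := fun hj =>
    hw <| (h.support_of_isPath rfl hG.2.1 hz hiz (q := .cons hzw (.cons hj .nil))
      (by simp [hzw.ne, hzc, hwc]) (by simp)).2 w (by simp) hzw.ne'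
  have htc (j) : t ≠ c j := by
    rintro rfl
    exact hwadj j hwt
  have htadj (j) : ¬ G.Adj t (c j) := fun hj =>
    hw <| (h.support_of_isPath rfl hG.2.1 hz hiz (q := .cons hzw (.cons hwt (.cons hj .nil)))
      (by simp [hzw.ne, hzc, hwc, hwt.ne, htc, Ne.symm htz]) (by simp)).2 w (by simp) hzw.ne'
  refine (h.induce (S := {v | ∀ x ∈ s(w, t), ¬ (v = x ∨ G.Adj v x)}) ?_).not_isAcyclic
    (hG.isAcyclic_induce_far hwt)
  intro k x hx
  rcases Sym2.mem_iff.1 hx with rfl | rfl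
  · exact fun hk => hk.elim (hwc k).symm fun hk => hwadj k hk.symm
  · exact fun hk => hk.elim (htc k).symm fun hk => htadj k hk.symm

lemma IsMinimalWellIndumatched.exists_isShallowRim [Finite V] (hG : IsMinimalWellIndumatched G) :
    ∃ c, IsShallowRim G G.girth c := by
  obtain ⟨v, C, hC, hlen⟩ :=
    exists_girth_eq_length.2 (not_isAcyclic_of_le_girth (by norm_num) hG.2.1)
  have h := isRim_cyclicGetVert hC
  rw [← hlen] at h
  refine ⟨_, h, hG.2.1, fun i j => h.eq_of_adj rfl, fun i z w hz hiz hzw hwi => ?_⟩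
  have hw : w ∉ Set.range (cyclicGetVert C) := by
    rintro ⟨j, rfl⟩
    have := (h.support_of_isPath rfl hG.2.1 hz hiz (Path.singleton hzw).2
      (by simp [Path.singleton])).1
    simp [Path.singleton, hiz.ne, hwi.symm] at this
  exact ⟨hw, fun t => hG.eq_of_adj_of_adj h hz hiz hzw hw⟩

/-! ### Positions of the edges near the rim -/

/-- `VertexAt G c i t v`: the vertex `v` is the rim vertex `c i` (then `t = 1`) or lies at height
one or two above it (then `t = 0`). -/
inductive VertexAt (G : SimpleGraph V) (c : ℤ → V) : ℤ → ℤ → V → Prop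
  | rim (i : ℤ) : VertexAt G c i 1 (c i)
  | inner {i : ℤ} {x : V} (hx : x ∉ Set.range c) (hix : G.Adj (c i) x) : VertexAt G c i 0 x
  | outer {i : ℤ} {x y : V} (hx : x ∉ Set.range c) (hix : G.Adj (c i) x) (hxy : G.Adj x y)
      (hy : y ≠ c i) : VertexAt G c i 0 y

/-- `EdgeAt G c p r e`: the edge `e` has position `p` along the rim and reach `r`. Positions are
measured in half steps, so that `c i` sits at `2 * i`. A rim edge has reach `2`, a spoke (joining
`c i` to a vertex off the rim) has reach `1`, and a tip (the next edge outwards) has reach `0`.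
The reaches are chosen such that two edges conflict when the distance of their positions is at most
the sum of their reaches. -/
inductive EdgeAt (G : SimpleGraph V) (c : ℤ → V) : ℤ → ℤ → Sym2 V → Prop
  | rim (i : ℤ) : EdgeAt G c (2 * i + 1) 2 s(c i, c (i + 1))
  | spoke {i : ℤ} {x : V} (hx : x ∉ Set.range c) (hix : G.Adj (c i) x) :
      EdgeAt G c (2 * i) 1 s(c i, x)
  | tip {i : ℤ} {x y : V} (hx : x ∉ Set.range c) (hix : G.Adj (c i) x) (hxy : G.Adj x y)
      (hy : y ≠ c i) : EdgeAt G c (2 * i) 0 s(x, y)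

namespace EdgeAt

variable {c : ℤ → V} {p q r s : ℤ} {e f : Sym2 V}

lemma exists_vertexAt (he : EdgeAt G c p r e) {v : V} (hv : v ∈ e) :
    ∃ i t, VertexAt G c i t v ∧ |2 * i - p| ≤ r - t := by
  cases he with
  | rim i =>
    rcases Sym2.mem_iff.1 hv with rfl | rfl
    · exact ⟨i, 1, .rim i, by grind⟩
    · exact ⟨i + 1, 1, .rim (i + 1), by grind⟩
  | spoke hx hix =>
    rcases Sym2.mem_iff.1 hv with rfl | rfl
    · exact ⟨_, 1, .rim _, by simp⟩
    · exact ⟨_, 0, .inner hx hix, by simp⟩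
  | tip hx hix hxy hy =>
    rcases Sym2.mem_iff.1 hv with rfl | rfl
    · exact ⟨_, 0, .inner hx hix, by simp⟩
    · exact ⟨_, 0, .outer hx hix hxy hy, by simp⟩

lemma mem_of_abs_le (he : EdgeAt G c p r e) {m : ℤ} (hm : |2 * m - p| ≤ r - 1) : c m ∈ e := by
  rw [abs_le] at hm
  cases he with
  | rim i =>
    obtain rfl | rfl : m = i ∨ m = i + 1 := by omega
    · exact Sym2.mem_mk_left _ _
    · exact Sym2.mem_mk_right _ _
  | @spoke i =>
    obtain rfl : m = i := by omega
    exact Sym2.mem_mk_left _ _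
  | tip => omega

lemma exists_mem_of_abs_le {n : ℕ} (h : IsRim G n c) (he : EdgeAt G c p r e) {m : ℤ}
    (hm : |2 * m - p| ≤ r + 1) : ∃ v ∈ e, c m = v ∨ G.Adj (c m) v := by
  rw [abs_le] at hm
  cases he with
  | rim i =>
    obtain hm | rfl | rfl | rfl : i = m + 1 ∨ m = i ∨ m = i + 1 ∨ m = i + 1 + 1 := by omega
    · exact ⟨c i, by simp, .inr (hm ▸ h.adj m)⟩
    · exact ⟨c m, by simp, .inl rfl⟩
    · exact ⟨c (i + 1), by simp, .inl rfl⟩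
    · exact ⟨c (i + 1), by simp, .inr (h.adj _).symm⟩
  | @spoke i =>
    obtain hm | rfl | rfl : i = m + 1 ∨ m = i ∨ m = i + 1 := by omega
    · exact ⟨c i, by simp, .inr (hm ▸ h.adj m)⟩
    · exact ⟨c m, by simp, .inl rfl⟩
    · exact ⟨c i, by simp, .inr (h.adj i).symm⟩
  | @tip i x y hx hix =>
    obtain rfl : m = i := by omega
    exact ⟨x, by simp, .inr hix⟩

lemma reach_cases (he : EdgeAt G c p r e) :
    r = 2 ∧ p % 2 = 1 ∨ r = 1 ∧ p % 2 = 0 ∨ r = 0 ∧ p % 2 = 0 := by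
  cases he <;> omega

lemma conflict {n : ℕ} (h : IsRim G n c) (he : EdgeAt G c p r e) (hf : EdgeAt G c q s f)
    (hr : 0 < r) (hpq : |p - q| ≤ r + s) : Conflict G e f := by
  rw [abs_le] at hpq
  obtain ⟨m, hm, hm'⟩ : ∃ m, |2 * m - p| ≤ r - 1 ∧ |2 * m - q| ≤ s + 1 := by
    have := he.reach_cases
    have := hf.reach_cases
    refine ⟨max (p - r + 1) (q - s) / 2, ?_⟩
    rw [abs_le, abs_le]
    omega
  obtain ⟨v, hv, hmv⟩ := hf.exists_mem_of_abs_le h hm'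
  exact ⟨c m, he.mem_of_abs_le hm, v, hv, hmv⟩

lemma of_modEq {n : ℕ} (h : IsRim G n c) (he : EdgeAt G c p r e) (hpq : p ≡ q [ZMOD 2 * n]) :
    EdgeAt G c q r e := by
  obtain ⟨k, rfl⟩ := Int.modEq_iff_add_fac.1 hpq
  have hper (i : ℤ) : c i = c (i + n * k) := (h.eq_iff _ _).2 (by simp [Int.ModEq])
  cases he with
  | rim i =>
    convert EdgeAt.rim (i + n * k) using 1
    · ring
    · rw [hper i, hper (i + 1), add_right_comm]
  | spoke hx hix =>
    rw [mul_assoc, ← mul_add, hper]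
    rw [hper] at hix
    exact .spoke hx hix
  | tip hx hix hxy hy =>
    rw [mul_assoc, ← mul_add]
    rw [hper] at hix hy
    exact .tip hx hix hxy hy

lemma mem_edgeSet {n : ℕ} (h : IsRim G n c) (he : EdgeAt G c p r e) : e ∈ G.edgeSet := by
  cases he with
  | rim i => exact h.adj i
  | spoke _ hix => exact hix
  | tip _ _ hxy => exact hxy

end EdgeAt

namespace IsShallowRim

variable {n : ℕ} {c : ℤ → V} (h : IsShallowRim G n c)
include h

lemma eq_of_outer {i : ℤ} {x y z : V} (hx : x ∉ Set.range c) (hix : G.Adj (c i) x)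
    (hxy : G.Adj x y) (hy : y ≠ c i) (hyz : G.Adj y z) : z = x :=
  (h.leaf i x y hx hix hxy hy).2 z hyz

lemma eq_of_inner {i j : ℤ} {x : V} (hx : x ∉ Set.range c) (hix : G.Adj (c i) x)
    (hjx : G.Adj (c j) x) : c j = c i := by
  by_contra hne
  exact (h.leaf i x _ hx hix hjx.symm hne).1 ⟨j, rfl⟩

lemma vertexAt_unique {i j t u : ℤ} {v : V} (hi : VertexAt G c i t v) (hj : VertexAt G c j u v) :
    t = u ∧ i ≡ j [ZMOD n] := by
  rw [← h.eq_iff]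
  cases hi with
  | rim =>
    generalize hv : c i = v at hj
    cases hj with
    | rim => exact ⟨rfl, rfl⟩
    | inner hx => exact (hx ⟨i, hv⟩).elim
    | outer hx hjx hxy hy => exact ((h.leaf _ _ _ hx hjx hxy hy).1 ⟨i, hv⟩).elim
  | inner hx hix =>
    cases hj with
    | rim => exact (hx ⟨j, rfl⟩).elim
    | inner _ hjx => exact ⟨rfl, (h.eq_of_inner hx hix hjx).symm⟩
    | outer hx' hjx' hxy hy =>
      exact (hx' ⟨_, h.eq_of_outer hx' hjx' hxy hy hix.symm⟩).elim
  | outer hx hix hxy hy =>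
    cases hj with
    | rim => exact ((h.leaf _ _ _ hx hix hxy hy).1 ⟨j, rfl⟩).elim
    | inner _ hjx => exact (hx ⟨_, h.eq_of_outer hx hix hxy hy hjx.symm⟩).elim
    | outer hx' hjx' hxy' hy' =>
      obtain rfl := h.eq_of_outer hx hix hxy hy hxy'.symm
      exact ⟨rfl, (h.eq_of_inner hx hix hjx').symm⟩

lemma exists_vertexAt_of_adj {i t : ℤ} {v w : V} (hv : VertexAt G c i t v) (hvw : G.Adj v w) :
    ∃ j u, VertexAt G c j u w ∧ |2 * i - 2 * j| ≤ t + u := by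
  cases hv with
  | rim =>
    by_cases hw : w ∈ Set.range c
    · obtain ⟨j, rfl⟩ := hw
      rcases h.eq_of_adj i j hvw with hj | hj <;> rw [hj]
      · exact ⟨i + 1, 1, .rim _, by grind⟩
      · exact ⟨i - 1, 1, .rim _, by grind⟩
    · exact ⟨i, 0, .inner hw hvw, by simp⟩
  | inner hx hix =>
    rcases eq_or_ne w (c i) with rfl | hw
    · exact ⟨i, 1, .rim i, by simp⟩
    · exact ⟨i, 0, .outer hx hix hvw hw, by simp⟩
  | outer hx hix hxy hy =>
    rw [h.eq_of_outer hx hix hxy hy hvw]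
    exact ⟨i, 0, .inner hx hix, by simp⟩

lemma exists_edgeAt {i t : ℤ} {v w : V} (hv : VertexAt G c i t v) (hvw : G.Adj v w) :
    ∃ p r, EdgeAt G c p r s(v, w) ∧ |p - 2 * i| ≤ r - t := by
  cases hv with
  | rim =>
    by_cases hw : w ∈ Set.range c
    · obtain ⟨j, rfl⟩ := hw
      rcases h.eq_of_adj i j hvw with hj | hj <;> rw [hj]
      · exact ⟨_, _, .rim i, by grind⟩
      · have hrim := EdgeAt.rim (G := G) (c := c) (i - 1)
        rw [sub_add_cancel, Sym2.eq_swap] at hrim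
        exact ⟨_, _, hrim, by grind⟩
    · exact ⟨_, _, .spoke hw hvw, by simp⟩
  | inner hx hix =>
    rcases eq_or_ne w (c i) with rfl | hw
    · rw [Sym2.eq_swap]
      exact ⟨_, _, .spoke hx hix, by simp⟩
    · exact ⟨_, _, .tip hx hix hvw hw, by simp⟩
  | outer hx hix hxy hy =>
    rw [h.eq_of_outer hx hix hxy hy hvw]
    rw [Sym2.eq_swap]
    exact ⟨_, _, .tip hx hix hxy hy, by simp⟩

variable {p q r s : ℤ} {e f : Sym2 V}

lemma exists_vertexAt_of_conflict (hf : EdgeAt G c q s f) (hef : Conflict G e f) :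
    ∃ u ∈ e, ∃ i t, VertexAt G c i t u ∧ |2 * i - q| ≤ s + t := by
  obtain ⟨u, hu, v, hv, huv⟩ := hef
  obtain ⟨j, t', hj, hjq⟩ := hf.exists_vertexAt hv
  refine ⟨u, hu, ?_⟩
  rcases huv with rfl | huv
  · have : 0 ≤ t' := by cases hj <;> simp
    exact ⟨j, t', hj, by omega⟩
  · obtain ⟨i, t, hi, hij⟩ := h.exists_vertexAt_of_adj hj huv.symm
    exact ⟨i, t, hi, by grind⟩

lemma exists_edgeAt_of_conflict (he : e ∈ G.edgeSet) (hf : EdgeAt G c q s f)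
    (hef : Conflict G e f) : ∃ p r, EdgeAt G c p r e ∧ |p - q| ≤ r + s := by
  obtain ⟨u, hu, i, t, hi, hiq⟩ := h.exists_vertexAt_of_conflict hf hef
  obtain ⟨w, rfl⟩ := Sym2.mem_iff_exists.1 hu
  obtain ⟨p, r, hp, hpi⟩ := h.exists_edgeAt hi he
  exact ⟨p, r, hp, by grind⟩

lemma not_conflict (he : EdgeAt G c p r e) (hf : EdgeAt G c q s f) (h₁ : r + s < p - q)
    (h₂ : p - q + r + s < 2 * n) : ¬ Conflict G e f := by
  intro hef
  obtain ⟨u, hu, i, t, hi, hiq⟩ := h.exists_vertexAt_of_conflict hf hef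
  obtain ⟨j, t', hj, hjp⟩ := he.exists_vertexAt hu
  obtain ⟨rfl, hij⟩ := h.vertexAt_unique hi hj
  obtain ⟨k, hk⟩ := hij.dvd
  obtain hk0 | hk1 : k ≤ 0 ∨ 1 ≤ k := by omega
  · nlinarith [abs_le.1 hiq, abs_le.1 hjp]
  · nlinarith [abs_le.1 hiq, abs_le.1 hjp]

end IsShallowRim

/-! ### Exchanging matchings along the rim -/

lemma isInducedMatching_of_pairwise {L : List (Sym2 V)} (hL : ∀ e ∈ L, e ∈ G.edgeSet)
    (hpair : L.Pairwise fun e f => ¬ Conflict G e f) :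
    IsInducedMatching G {e | e ∈ L} ∧ {e | e ∈ L}.ncard = L.length := by
  classical
  have : Std.Symm fun e f => ¬ Conflict G e f := ⟨fun _ _ hef hfe => hef hfe.symm⟩
  refine ⟨isInducedMatching_iff.2 ⟨hL, fun e he f hf hef => ?_⟩, ?_⟩
  · by_contra hne
    exact hpair.forall he hf hne hef
  · have hnodup : L.Nodup := hpair.imp fun {e f} hef (heq : e = f) => hef (heq ▸ Conflict.refl G e)
    rw [← List.toFinset_card_of_nodup hnodup, ← Set.ncard_coe_finset, List.coe_toFinset]

/-- There is an edge of reach `r` at position `p`. For odd `p` and `r = 2` this always holds;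
for even `p` it says that a spoke (`r = 1`) or a tip (`r = 0`) is attached to `c (p / 2)`. -/
def Occupied (G : SimpleGraph V) (c : ℤ → V) (p r : ℤ) : Prop :=
  ∃ e, EdgeAt G c p r e

/-- The pairs `a` and `b` of a position and a reach are so far apart, in both directions around a
rim of length `n`, that edges there cannot conflict. -/
def Apart (n : ℕ) (a b : ℤ × ℤ) : Prop :=
  a.1 + a.2 + b.2 < b.1 ∧ b.1 + b.2 + a.2 < a.1 + 2 * n

namespace Occupied

variable {c : ℤ → V} {p q r s : ℤ}

lemma reach_cases (hp : Occupied G c p r) :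
    r = 2 ∧ p % 2 = 1 ∨ r = 1 ∧ p % 2 = 0 ∨ r = 0 ∧ p % 2 = 0 :=
  hp.elim fun _ he => he.reach_cases

lemma rim (hp : p % 2 = 1) : Occupied G c p 2 := by
  obtain ⟨i, rfl⟩ : ∃ i, p = 2 * i + 1 := ⟨p / 2, by omega⟩
  exact ⟨_, .rim i⟩

lemma spoke_of_tip (hp : Occupied G c p 0) : Occupied G c p 1 := by
  obtain ⟨_, he⟩ := hp
  cases he with
  | tip hx hix => exact ⟨_, .spoke hx hix⟩

lemma ne_of_not (hp : Occupied G c p r) (hq : ¬ Occupied G c q s) : ¬ (p = q ∧ r = s) := by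
  rintro ⟨rfl, rfl⟩
  exact hq hp

lemma of_modEq {n : ℕ} (h : IsRim G n c) (hp : Occupied G c p r) (hpq : p ≡ q [ZMOD 2 * n]) :
    Occupied G c q r :=
  hp.imp fun _ he => he.of_modEq h hpq

end Occupied

namespace IsShallowRim

variable {n : ℕ} {c : ℤ → V} (h : IsShallowRim G n c)
include h

lemma isInducedMatching_of_apart {L : List (ℤ × ℤ)} {f : ℤ × ℤ → Sym2 V}
    (hf : ∀ a ∈ L, EdgeAt G c a.1 a.2 (f a)) (hL : L.Pairwise (Apart n)) :
    IsInducedMatching G {e | e ∈ L.map f} ∧ {e | e ∈ L.map f}.ncard = L.length := by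
  rw [← L.length_map (f := f)]
  refine isInducedMatching_of_pairwise (fun e he => ?_) (List.pairwise_map.2 ?_)
  · obtain ⟨a, ha, rfl⟩ := List.mem_map.1 he
    exact (hf a ha).mem_edgeSet h.toIsRim
  · refine hL.imp_of_mem fun {a b} ha hb hab hconf => ?_
    exact h.not_conflict (hf b hb) (hf a ha) (by have := hab.1; omega) (by have := hab.2; omega)
      hconf.symm

lemma length_le_length [Finite V] (hG : WellIndumatched G) {P Q : List (ℤ × ℤ)}
    (hP : ∀ a ∈ P, Occupied G c a.1 a.2) (hQ : ∀ a ∈ Q, Occupied G c a.1 a.2)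
    (hPa : P.Pairwise (Apart n)) (hQa : Q.Pairwise (Apart n))
    (hdom : ∀ p r, Occupied G c p r → ∀ b ∈ Q, |p - b.1| ≤ r + b.2 →
      ∃ a ∈ P, 0 < a.2 ∧ (|a.1 - p| ≤ a.2 + r ∨ |a.1 - 2 * n - p| ≤ a.2 + r)) :
    Q.length ≤ P.length := by
  have : Nonempty (Sym2 V) := ⟨s(c 0, c 0)⟩
  choose! f hf using hP
  choose! g hg using hQ
  obtain ⟨hPM, hPc⟩ := h.isInducedMatching_of_apart hf hPa
  obtain ⟨hQM, hQc⟩ := h.isInducedMatching_of_apart hg hQa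
  rw [← hPc, ← hQc]
  refine hG.ncard_le_of_dominated hPM hQM fun e he ⟨q, hq, heq⟩ => ?_
  obtain ⟨b, hb, rfl⟩ := List.mem_map.1 hq
  obtain ⟨p, r, hep, hpb⟩ := h.exists_edgeAt_of_conflict he (hg b hb) heq
  obtain ⟨a, ha, ha0, hap⟩ := hdom p r ⟨e, hep⟩ b hb hpb
  refine ⟨f a, List.mem_map_of_mem ha, Conflict.symm ?_⟩
  rcases hap with hap | hap
  · exact (hf a ha).conflict h.toIsRim hep ha0 hap
  · exact ((hf a ha).of_modEq h.toIsRim (by simp [Int.ModEq])).conflict h.toIsRim hep ha0 hap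

section Rules

variable [Finite V] (hG : WellIndumatched G) {p : ℤ}
include hG

lemma not_tip_add_two (hp : Occupied G c p 0) : ¬ Occupied G c (p + 2) 0 := by
  intro hp2
  have hn := h.nine_le
  have hpar := hp.reach_cases
  have hrim : Occupied G c (p + 1) 2 := .rim (by omega)
  have hle := h.length_le_length hG (P := [(p + 1, 2)]) (Q := [(p, 0), (p + 2, 0)])
    (by simp [hrim]) (by simp [hp, hp2]) (by simp) (by simp [Apart]; omega) fun _ _ _ => by
      simp only [List.mem_cons, List.not_mem_nil, or_false, forall_eq_or_imp, forall_eq,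
        exists_eq_left, abs_le]
      omega
  simp at hle

lemma spoke_add_four_of_tip (hp : Occupied G c p 0) : Occupied G c (p + 4) 1 := by
  by_contra hno
  have hn := h.nine_le
  have hpar := hp.reach_cases
  have hrim (m : ℤ) (hm : m % 2 = 1) : Occupied G c (p + m) 2 := .rim (by omega)
  have hle := h.length_le_length hG
    (P := [(p, 1), (p + 9, 2)]) (Q := [(p, 0), (p + 3, 2), (p + 9, 2)])
    (by simp [hp.spoke_of_tip, hrim]) (by simp [hp, hrim])
    (by simp [Apart]; omega) (by simp [Apart]; omega) fun q r hq => by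
      have hqr := hq.reach_cases
      have hq2 := hq.ne_of_not (h.not_tip_add_two hG hp)
      have hq4 := hq.ne_of_not hno
      have hq4' := hq.ne_of_not fun htip => hno htip.spoke_of_tip
      simp only [List.mem_cons, List.not_mem_nil, or_false, forall_eq_or_imp, forall_eq,
        exists_eq_or_imp, exists_eq_left, abs_le]
      omega
  simp at hle

lemma tip_add_four_of_spoke (hp : Occupied G c p 1) (hp4 : Occupied G c (p + 4) 1) :
    Occupied G c (p + 4) 0 := by
  by_contra hno
  have hn := h.nine_le
  have hpar := hp.reach_cases
  have hrim (m : ℤ) (hm : m % 2 = 1) : Occupied G c (p + m) 2 := .rim (by omega)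
  have hle := h.length_le_length hG
    (P := [(p + 1, 2), (p + 9, 2)]) (Q := [(p, 1), (p + 4, 1), (p + 9, 2)])
    (by simp [hrim]) (by simp [hp, hp4, hrim])
    (by simp [Apart]; omega) (by simp [Apart]; omega) fun q r hq => by
      have hqr := hq.reach_cases
      have hq4 := hq.ne_of_not hno
      simp only [List.mem_cons, List.not_mem_nil, or_false, forall_eq_or_imp, forall_eq,
        exists_eq_or_imp, exists_eq_left, abs_le]
      omega
  simp at hle

lemma tip_add_four (hp : Occupied G c p 0) : Occupied G c (p + 4) 0 :=
  h.tip_add_four_of_spoke hG hp.spoke_of_tip (h.spoke_add_four_of_tip hG hp)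

lemma tip_add_four_mul (hp : Occupied G c p 0) (m : ℤ) : Occupied G c (p + 4 * m) 0 := by
  obtain ⟨k, -, hk⟩ := exists_natCast_modEq (n := n) (by have := h.nine_le; omega) m
  have hnat (k : ℕ) : Occupied G c (p + 4 * k) 0 := by
    induction k with
    | zero => simpa using hp
    | succ k ih =>
      push_cast
      rw [mul_add_one, ← add_assoc]
      exact h.tip_add_four hG ih
  refine (hnat k).of_modEq h.toIsRim (Int.ModEq.add_left p ?_)
  rw [show (4 : ℤ) = 2 * 2 from rfl, mul_assoc, mul_assoc]
  exact (hk.mul_left 2).mul_left'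

lemma even_of_tip (hp : Occupied G c p 0) : Even n := by
  by_contra hn
  obtain ⟨k, rfl⟩ := Nat.not_even_iff_odd.1 hn
  refine h.not_tip_add_two hG hp ((h.tip_add_four_mul hG hp (k + 1)).of_modEq h.toIsRim ?_)
  exact Int.modEq_iff_add_fac.2 ⟨-1, by push_cast; ring⟩

section NoTips

variable (htip : ∀ q, ¬ Occupied G c q 0)
include htip

lemma not_spoke_add_four (hp : Occupied G c p 1) : ¬ Occupied G c (p + 4) 1 :=
  fun hp4 => htip _ (h.tip_add_four_of_spoke hG hp hp4)

lemma spoke_add_six (hp : Occupied G c p 1) : Occupied G c (p + 6) 1 := by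
  by_contra hno
  have hn := h.nine_le
  have hpar := hp.reach_cases
  have hrim (m : ℤ) (hm : m % 2 = 1) : Occupied G c (p + m) 2 := .rim (by omega)
  have hle := h.length_le_length hG
    (P := [(p + 1, 2), (p + 11, 2)]) (Q := [(p, 1), (p + 5, 2), (p + 11, 2)])
    (by simp [hrim]) (by simp [hp, hrim])
    (by simp [Apart]; omega) (by simp [Apart]; omega) fun q r hq => by
      have hqr := hq.reach_cases
      have hq0 := hq.ne_of_not (htip q)
      have hq4 := hq.ne_of_not (h.not_spoke_add_four hG htip hp)
      have hq6 := hq.ne_of_not hno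
      simp only [List.mem_cons, List.not_mem_nil, or_false, forall_eq_or_imp, forall_eq,
        exists_eq_or_imp, exists_eq_left, abs_le]
      omega
  simp at hle

lemma ne_nine_of_spoke (hp : Occupied G c p 1) : n ≠ 9 := by
  intro hn
  have hpar := hp.reach_cases
  have hp6 := h.spoke_add_six hG htip hp
  have hno : ¬ Occupied G c (p + 8) 1 := fun hp8 =>
    h.not_spoke_add_four hG htip hp8 (by simpa [add_assoc] using h.spoke_add_six hG htip hp6)
  have hrim (m : ℤ) (hm : m % 2 = 1) : Occupied G c (p + m) 2 := .rim (by omega)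
  have hle := h.length_le_length hG
    (P := [(p + 3, 2), (p + 13, 2)]) (Q := [(p, 1), (p + 6, 1), (p + 13, 2)])
    (by simp [hrim]) (by simp [hp, hp6, hrim])
    (by simp [Apart]; omega) (by simp [Apart]; omega) fun q r hq => by
      have hqr := hq.reach_cases
      have hq0 := hq.ne_of_not (htip q)
      have hq8 := hq.ne_of_not hno
      simp only [List.mem_cons, List.not_mem_nil, or_false, forall_eq_or_imp, forall_eq,
        exists_eq_or_imp, exists_eq_left, abs_le]
      omega
  simp at hle

lemma ne_ten_of_spoke (hp : Occupied G c p 1) : n ≠ 10 := by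
  rintro rfl
  have hp24 := h.spoke_add_six hG htip <| h.spoke_add_six hG htip <|
    h.spoke_add_six hG htip <| h.spoke_add_six hG htip hp
  refine h.not_spoke_add_four hG htip hp (hp24.of_modEq h.toIsRim ?_)
  rw [Int.ModEq]
  omega

lemma lt_eleven_of_spoke (hp : Occupied G c p 1) : n < 11 := by
  by_contra! hn
  have hpar := hp.reach_cases
  have hp6 := h.spoke_add_six hG htip hp
  have hrim (m : ℤ) (hm : m % 2 = 1) : Occupied G c (p + m) 2 := .rim (by omega)
  have hrim' : Occupied G c (p - 5) 2 := .rim (by omega)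
  have hle := h.length_le_length hG
    (P := [(p - 5, 2), (p + 3, 2), (p + 11, 2)])
    (Q := [(p - 5, 2), (p, 1), (p + 6, 1), (p + 11, 2)])
    (by simp [hrim, hrim']) (by simp [hp, hp6, hrim, hrim'])
    (by simp [Apart]; omega) (by simp [Apart]; omega) fun q r hq => by
      have hqr := hq.reach_cases
      have hq0 := hq.ne_of_not (htip q)
      simp only [List.mem_cons, List.not_mem_nil, or_false, forall_eq_or_imp, forall_eq,
        exists_eq_or_imp, exists_eq_left, abs_le]
      omega
  simp at hle

lemma not_spoke (p : ℤ) : ¬ Occupied G c p 1 := fun hp => by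
  have := h.nine_le
  have := h.ne_nine_of_spoke hG htip hp
  have := h.ne_ten_of_spoke hG htip hp
  have := h.lt_eleven_of_spoke hG htip hp
  omega

lemma eleven_le : 11 ≤ n := by
  by_contra! hn
  have hn' := h.nine_le
  have hle := h.length_le_length hG
    (P := [(3, 2), (13, 2)]) (Q := [(1, 2), (7, 2), (13, 2)])
    (by simp [Occupied.rim]) (by simp [Occupied.rim])
    (by simp [Apart]; omega) (by simp [Apart]; omega) fun q r hq => by
      have hqr := hq.reach_cases
      have hq0 := hq.ne_of_not (htip q)
      have hq1 := hq.ne_of_not (h.not_spoke hG htip q)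
      simp only [List.mem_cons, List.not_mem_nil, or_false, forall_eq_or_imp, forall_eq,
        exists_eq_or_imp, exists_eq_left, abs_le]
      omega
  simp at hle

lemma le_eleven : n ≤ 11 := by
  by_contra! hn
  have hle := h.length_le_length hG
    (P := [(-5, 2), (3, 2), (13, 2)]) (Q := [(-5, 2), (1, 2), (7, 2), (13, 2)])
    (by simp [Occupied.rim]) (by simp [Occupied.rim])
    (by simp [Apart]; omega) (by simp [Apart]; omega) fun q r hq => by
      have hqr := hq.reach_cases
      have hq0 := hq.ne_of_not (htip q)
      have hq1 := hq.ne_of_not (h.not_spoke hG htip q)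
      simp only [List.mem_cons, List.not_mem_nil, or_false, forall_eq_or_imp, forall_eq,
        exists_eq_or_imp, exists_eq_left, abs_le]
      omega
  simp at hle

end NoTips

end Rules

end IsShallowRim

/-! ### Cycles -/

section CycleGraph

open scoped Fin.CommRing

variable {n : ℕ}

lemma conflict_cycleGraph_iff (i j : Fin (n + 3)) :
    Conflict (cycleGraph (n + 3)) s(i, i + 1) s(j, j + 1) ↔
      ∃ a ∈ ({0, 1, 2} : Finset (Fin (n + 3))), ∃ b ∈ ({0, 1, 2} : Finset (Fin (n + 3))),
        i + a = j + b := by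
  simp only [Conflict, Sym2.mem_iff, exists_eq_or_imp, exists_eq_left, cycleGraph_adj,
    Finset.mem_insert, Finset.mem_singleton, sub_eq_iff_eq_add, add_zero, ← add_assoc,
    ← one_add_one_eq_two (R := Fin (n + 3)), add_comm (1 : Fin (n + 3)), add_left_inj]
  tauto

lemma exists_eq_of_mem_edgeSet_cycleGraph {e : Sym2 (Fin (n + 3))}
    (he : e ∈ (cycleGraph (n + 3)).edgeSet) : ∃ i, e = s(i, i + 1) := by
  induction e with
  | _ a b =>
    rw [mem_edgeSet, cycleGraph_adj] at he
    rcases he with he | he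
    · exact ⟨b, by rw [Sym2.eq_swap, ← he, add_sub_cancel]⟩
    · exact ⟨a, by rw [← he, add_sub_cancel]⟩

lemma injective_cycleGraph_edge :
    Function.Injective fun i : Fin (n + 3) => s(i, i + 1) := by
  intro i j hij
  rcases Sym2.eq_iff.1 hij with ⟨hij, -⟩ | ⟨rfl, hij⟩
  · exact hij
  · rw [add_assoc, add_eq_left, Fin.ext_iff, Fin.val_add, Fin.val_one', Fin.val_zero,
      Nat.mod_eq_of_lt (a := 1) (by omega), Nat.mod_eq_of_lt (by omega)] at hij
    omega

open scoped Pointwise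

lemma card_window : ({0, 1, 2} : Finset (Fin (n + 3))).card = 3 := by
  have h2 : 2 % (n + 3) = 2 := Nat.mod_eq_of_lt (by omega)
  exact Finset.card_eq_three.2
    ⟨0, 1, 2, by simp, by simp [Fin.ext_iff, h2], by simp [Fin.ext_iff, h2], rfl⟩

lemma card_window_sub_window :
    ({0, 1, 2} - {0, 1, 2} : Finset (Fin (n + 3))).card ≤ 5 := by
  refine (Finset.card_le_card (t := {0, 1, 2, -1, -2}) fun x hx => ?_).trans Finset.card_le_five
  simp only [Finset.mem_sub, Finset.mem_insert, Finset.mem_singleton] at hx ⊢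
  obtain ⟨a, rfl | rfl | rfl, b, rfl | rfl | rfl, rfl⟩ := hx <;> norm_num

/- With `I` the set of first endpoints of `M`, the translates by `I` of `{0, 1, 2}` are disjoint,
while those of `{0, 1, 2} - {0, 1, 2}` cover the cycle. -/
lemma IsMaximalInducedMatching.ncard_cycleGraph {M : Set (Sym2 (Fin (n + 3)))}
    (hM : IsMaximalInducedMatching (cycleGraph (n + 3)) M) :
    3 * M.ncard ≤ n + 3 ∧ n + 3 ≤ 5 * M.ncard := by
  classical
  obtain ⟨hMind, hdom⟩ := isMaximalInducedMatching_iff.1 hM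
  obtain ⟨hME, hMc⟩ := isInducedMatching_iff.1 hMind
  let I : Finset (Fin (n + 3)) := {i | s(i, i + 1) ∈ M}
  have hmem {i : Fin (n + 3)} : i ∈ I ↔ s(i, i + 1) ∈ M := by simp [I]
  have hMI : M = (fun i => s(i, i + 1)) '' I := by
    refine Set.Subset.antisymm (fun e he => ?_) (Set.image_subset_iff.2 fun i => hmem.1)
    obtain ⟨i, rfl⟩ := exists_eq_of_mem_edgeSet_cycleGraph (hME he)
    exact ⟨i, hmem.2 he, rfl⟩
  rw [hMI, Set.ncard_image_of_injective _ injective_cycleGraph_edge, Set.ncard_coe_finset]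
  constructor
  · have hdisj : (I + {0, 1, 2}).card = I.card * 3 := by
      rw [Finset.card_add_iff.2, card_window]
      rintro ⟨i, a⟩ ⟨hi, ha⟩ ⟨j, b⟩ ⟨hj, hb⟩ hij
      obtain rfl := injective_cycleGraph_edge <| hMc _ (hmem.1 hi) _ (hmem.1 hj) <|
        (conflict_cycleGraph_iff i j).2 ⟨a, ha, b, hb, hij⟩
      exact congrArg _ (add_left_cancel hij)
    have := Finset.card_le_univ (I + {0, 1, 2})
    rw [Fintype.card_fin] at this
    omega
  · have hcov : I + ({0, 1, 2} - {0, 1, 2}) = Finset.univ := by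
      refine Finset.eq_univ_of_forall fun j => ?_
      obtain ⟨f, hf, hjf⟩ := hdom s(j, j + 1) (by simp [cycleGraph_adj])
      obtain ⟨i, rfl⟩ := exists_eq_of_mem_edgeSet_cycleGraph (hME hf)
      obtain ⟨b, hb, a, ha, hij⟩ := (conflict_cycleGraph_iff j i).1 hjf
      exact Finset.mem_add.2 ⟨i, hmem.2 hf, a - b, Finset.sub_mem_sub ha hb,
        by rw [← add_sub_assoc, ← hij, add_sub_cancel_right]⟩
    have := Finset.card_add_le (s := I) (t := {0, 1, 2} - {0, 1, 2})
    have := Nat.mul_le_mul_left I.card (card_window_sub_window (n := n))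
    rw [hcov, Finset.card_univ, Fintype.card_fin] at *
    omega

end CycleGraph

lemma wellIndumatched_cycleGraph_eleven : WellIndumatched (cycleGraph 11) := by
  intro M N hM hN
  have hM3 : 3 * M.ncard ≤ 11 ∧ 11 ≤ 5 * M.ncard := hM.ncard_cycleGraph
  have hN3 : 3 * N.ncard ≤ 11 ∧ 11 ≤ 5 * N.ncard := hN.ncard_cycleGraph
  omega

lemma exists_ne_mem_edges {v x : V} {D : G.Walk v v} (hD : D.IsCycle) (hx : x ∈ D.support) :
    ∃ y z, y ≠ z ∧ s(x, y) ∈ D.edges ∧ s(x, z) ∈ D.edges := by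
  obtain ⟨y, z, hyz, hx⟩ := Set.ncard_eq_two.1 (hD.ncard_neighborSet_toSubgraph_eq_two hx)
  have hmem {w} (hw : w ∈ ({y, z} : Set V)) : s(x, w) ∈ D.edges :=
    Walk.adj_toSubgraph_iff_mem_edges.1 (hx.symm.subset hw)
  exact ⟨y, z, hyz, hmem (by simp), hmem (by simp)⟩

lemma length_eq_of_mem_edges_iff {v w : V} {C : G.Walk v v} {D : G.Walk w w} (hC : C.IsTrail)
    (hD : D.IsTrail) (h : ∀ e, e ∈ C.edges ↔ e ∈ D.edges) : C.length = D.length := by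
  rw [← C.length_edges, ← D.length_edges]
  exact ((List.perm_ext_iff_of_nodup hC.edges_nodup hD.edges_nodup).2 h).length_eq

lemma mem_edges_iff_of_support_subset_range {c : ℤ → V}
    (hc : ∀ i j, G.Adj (c i) (c j) → c j = c (i + 1) ∨ c j = c (i - 1)) {v : V}
    {D : G.Walk v v} (hD : D.IsCycle) (hsupp : ∀ x ∈ D.support, x ∈ Set.range c) (e : Sym2 V) :
    e ∈ D.edges ↔ ∃ i, e = s(c i, c (i + 1)) := by
  have hnext {i} (hi : c i ∈ D.support) :
      s(c i, c (i + 1)) ∈ D.edges ∧ s(c i, c (i - 1)) ∈ D.edges := by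
    obtain ⟨y, z, hyz, hy, hz⟩ := exists_ne_mem_edges hD hi
    obtain ⟨a, rfl⟩ := hsupp y (D.snd_mem_support_of_mem_edges hy)
    obtain ⟨b, rfl⟩ := hsupp z (D.snd_mem_support_of_mem_edges hz)
    rcases hc i a (D.adj_of_mem_edges hy) with ha | ha <;>
      rcases hc i b (D.adj_of_mem_edges hz) with hb | hb <;> rw [ha] at hy hyz <;>
        rw [hb] at hz hyz
    · exact (hyz rfl).elim
    · exact ⟨hy, hz⟩
    · exact ⟨hz, hy⟩
    · exact (hyz rfl).elim
  obtain ⟨i₀, rfl⟩ := hsupp v D.start_mem_support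
  have hall (i) : c i ∈ D.support := by
    refine Int.inductionOn' i i₀ D.start_mem_support (fun i _ ih => ?_) fun i _ ih => ?_
    · exact D.snd_mem_support_of_mem_edges (hnext ih).1
    · exact D.snd_mem_support_of_mem_edges (hnext ih).2
  constructor
  · induction e with
    | _ a b =>
      intro he
      obtain ⟨i, rfl⟩ := hsupp a (D.fst_mem_support_of_mem_edges he)
      obtain ⟨j, rfl⟩ := hsupp b (D.snd_mem_support_of_mem_edges he)
      rcases hc i j (D.adj_of_mem_edges he) with hj | hj
      · exact ⟨i, by rw [hj]⟩
      · exact ⟨i - 1, by rw [hj, sub_add_cancel, Sym2.eq_swap]⟩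
  · rintro ⟨i, rfl⟩
    exact (hnext (hall i)).1

lemma IsRim.length_eq {n : ℕ} {c : ℤ → V} (h : IsRim G n c)
    (hc : ∀ i j, G.Adj (c i) (c j) → c j = c (i + 1) ∨ c j = c (i - 1)) {v : V}
    {D : G.Walk v v} (hD : D.IsCycle) (hsupp : ∀ x ∈ D.support, x ∈ Set.range c) :
    D.length = n := by
  obtain ⟨w, C, hC, hlen, hCsupp⟩ := h.exists_isCycle
  rw [← hlen]
  exact length_eq_of_mem_edges_iff hD.isTrail hC.isTrail fun e =>
    (mem_edges_iff_of_support_subset_range hc hD hsupp e).trans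
      (mem_edges_iff_of_support_subset_range hc hC hCsupp e).symm

open scoped Fin.CommRing in
lemma isRim_cycleGraph {n : ℕ} : IsRim (cycleGraph (n + 3)) (n + 3) ((↑) : ℤ → Fin (n + 3)) where
  three_le := by omega
  eq_iff i j := CharP.intCast_eq_intCast (Fin (n + 3)) (n + 3)
  adj i := by simp [cycleGraph_adj]

open scoped Fin.CommRing in
lemma length_eq_of_isCycle_cycleGraph {n : ℕ} {v : Fin (n + 3)}
    {D : (cycleGraph (n + 3)).Walk v v} (hD : D.IsCycle) : D.length = n + 3 := by
  refine isRim_cycleGraph.length_eq (fun i j hij => ?_) hD fun x _ =>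
    ⟨(x.val : ℤ), by simp⟩
  rw [cycleGraph_adj] at hij
  push_cast
  rcases hij with hij | hij
  · exact .inr (eq_sub_of_add_eq' (sub_eq_iff_eq_add.1 hij).symm)
  · exact .inl (sub_eq_iff_eq_add'.1 hij)

lemma girth_eq_of_forall_isCycle {n : ℕ} (hG : ¬ G.IsAcyclic)
    (hlen : ∀ v (D : G.Walk v v), D.IsCycle → D.length = n) : G.girth = n := by
  obtain ⟨v, D, hD, hgirth⟩ := exists_girth_eq_length.2 hG
  rw [hgirth, hlen v D hD]

lemma girth_cycleGraph {n : ℕ} : (cycleGraph (n + 3)).girth = n + 3 :=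
  girth_eq_of_forall_isCycle (fun h => h _ cycleGraph.isCycle_cycle)
    fun _ _ => length_eq_of_isCycle_cycleGraph

/-! ### Suns -/

lemma IsMaximalInducedMatching.ncard_eq_card {ι : Type*} {M : Set (Sym2 V)}
    (hM : IsMaximalInducedMatching G M) {b : ι → Sym2 V} (hb : ∀ i, b i ∈ G.edgeSet)
    (hclique : ∀ i, ∀ e ∈ G.edgeSet, ∀ f ∈ G.edgeSet,
      Conflict G (b i) e → Conflict G (b i) f → Conflict G e f)
    (hcover : ∀ e ∈ G.edgeSet, ∃! i, Conflict G (b i) e) : M.ncard = Nat.card ι := by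
  obtain ⟨hMind, hdom⟩ := isMaximalInducedMatching_iff.1 hM
  obtain ⟨hME, hMc⟩ := isInducedMatching_iff.1 hMind
  choose m hm hbm using fun i => hdom (b i) (hb i)
  have hinj : Function.Injective m := fun i j hij =>
    (hcover (m i) (hME (hm i))).unique (hbm i) (hij ▸ hbm j)
  have hrange : M = Set.range m := by
    refine Set.Subset.antisymm (fun e he => ?_) (Set.range_subset_iff.2 hm)
    obtain ⟨i, hi, -⟩ := hcover e (hME he)
    exact ⟨i, hMc _ (hm i) _ he (hclique i _ (hME (hm i)) _ (hME he) (hbm i) hi)⟩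
  rw [hrange, ← Set.image_univ, Set.ncard_image_of_injective _ hinj, Set.ncard_univ]

/-- The cycle of length `2 * k` with a path of length `2` attached to every second vertex. The
cycle runs through `(0, 0), (0, 1), (1, 0), (1, 1), …` and the path at `(i, 1)` is
`(i, 1), (i, 2), (i, 3)`. -/
def sunGraph (k : ℕ) : SimpleGraph (ZMod k × Fin 4) :=
  fromRel fun a b => a.2 = 1 ∧ (b = (a.1, 0) ∨ b = (a.1 + 1, 0) ∨ b = (a.1, 2)) ∨
    a.2 = 2 ∧ b = (a.1, 3)

namespace sunGraph

variable {k : ℕ} {i : ZMod k} {w : ZMod k × Fin 4}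

lemma adj_zero : (sunGraph k).Adj (i, 0) w ↔ w = (i, 1) ∨ w = (i - 1, 1) := by
  obtain ⟨j, t⟩ := w
  fin_cases t <;> simp [sunGraph, eq_comm, eq_sub_iff_add_eq]

lemma adj_one :
    (sunGraph k).Adj (i, 1) w ↔ w = (i, 0) ∨ w = (i + 1, 0) ∨ w = (i, 2) := by
  obtain ⟨j, t⟩ := w
  fin_cases t <;> simp [sunGraph, eq_comm]

lemma adj_two : (sunGraph k).Adj (i, 2) w ↔ w = (i, 1) ∨ w = (i, 3) := by
  obtain ⟨j, t⟩ := w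
  fin_cases t <;> simp [sunGraph, eq_comm]

lemma adj_three : (sunGraph k).Adj (i, 3) w ↔ w = (i, 2) := by
  obtain ⟨j, t⟩ := w
  fin_cases t <;> simp [sunGraph, eq_comm]

lemma eq_of_mem_edgeSet {e : Sym2 (ZMod k × Fin 4)} (he : e ∈ (sunGraph k).edgeSet) :
    ∃ i, e = s((i, 1), (i, 0)) ∨ e = s((i, 1), (i + 1, 0)) ∨ e = s((i, 1), (i, 2)) ∨
      e = s((i, 2), (i, 3)) := by
  induction e with
  | _ a b =>
    wlog hab : a.2 = 1 ∧ (b = (a.1, 0) ∨ b = (a.1 + 1, 0) ∨ b = (a.1, 2)) ∨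
      a.2 = 2 ∧ b = (a.1, 3) generalizing a b
    · rw [Sym2.eq_swap]
      have hadj : (sunGraph k).Adj a b := he
      exact this b a hadj.symm (((fromRel_adj _ _ _).1 hadj).2.resolve_left hab)
    obtain ⟨i, t⟩ := a
    rcases hab with ⟨rfl, rfl | rfl | rfl⟩ | ⟨rfl, rfl⟩ <;> exact ⟨i, by simp⟩

lemma conflict_ray_iff {e : Sym2 (ZMod k × Fin 4)} (he : e ∈ (sunGraph k).edgeSet) :
    Conflict (sunGraph k) s((i, 2), (i, 3)) e ↔ (i, 1) ∈ e ∨ (i, 2) ∈ e := by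
  have hthree (h : (i, 3) ∈ e) : (i, 2) ∈ e := by
    obtain ⟨w, rfl⟩ := Sym2.mem_iff_exists.1 h
    exact Sym2.mem_iff.2 (.inr (adj_three.1 he).symm)
  simp only [Conflict, Sym2.mem_iff, exists_eq_or_imp, exists_eq_left, adj_two, adj_three]
  grind

lemma existsUnique_conflict_ray {e : Sym2 (ZMod k × Fin 4)} (he : e ∈ (sunGraph k).edgeSet) :
    ∃! i, Conflict (sunGraph k) s((i, 2), (i, 3)) e := by
  simp only [conflict_ray_iff he]
  obtain ⟨i, rfl | rfl | rfl | rfl⟩ := eq_of_mem_edgeSet he <;> exact ⟨i, by simp, by simp⟩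

lemma wellIndumatched : WellIndumatched (sunGraph k) := by
  have hcard {M} (hM : IsMaximalInducedMatching (sunGraph k) M) : M.ncard = Nat.card (ZMod k) := by
    refine hM.ncard_eq_card (b := fun i => s((i, 2), (i, 3))) (fun i => adj_two.2 (by simp))
      (fun i e he f hf hie hif => ?_) fun e => existsUnique_conflict_ray
    rw [conflict_ray_iff he] at hie
    rw [conflict_ray_iff hf] at hif
    have hadj : (sunGraph k).Adj (i, 1) (i, 2) := adj_one.2 (by simp)
    rcases hie with hie | hie <;> rcases hif with hif | hif
    · exact ⟨_, hie, _, hif, .inl rfl⟩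
    · exact ⟨_, hie, _, hif, .inr hadj⟩
    · exact ⟨_, hie, _, hif, .inr hadj.symm⟩
    · exact ⟨_, hie, _, hif, .inl rfl⟩
  intro M N hM hN
  rw [hcard hM, hcard hN]

lemma connected (k : ℕ) : (sunGraph k).Connected := by
  have hpath (i : ZMod k) (t : Fin 4) : (sunGraph k).Reachable (i, 0) (i, t) := by
    have h1 : (sunGraph k).Adj (i, 0) (i, 1) := adj_zero.2 (by simp)
    have h2 : (sunGraph k).Adj (i, 1) (i, 2) := adj_one.2 (by simp)
    have h3 : (sunGraph k).Adj (i, 2) (i, 3) := adj_two.2 (by simp)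
    fin_cases t
    · exact .refl _
    · exact h1.reachable
    · exact h1.reachable.trans h2.reachable
    · exact (h1.reachable.trans h2.reachable).trans h3.reachable
  have hnext (i : ZMod k) : (sunGraph k).Reachable (i, 0) (i + 1, 0) :=
    (hpath i 1).trans (adj_one.2 (by simp) : (sunGraph k).Adj _ _).reachable
  have hrim (m : ℤ) : (sunGraph k).Reachable (0, 0) ((m : ZMod k), 0) := by
    induction m using Int.induction_on with
    | zero => simp
    | succ m ih => simpa using ih.trans (hnext _)
    | pred m ih =>
      refine ih.trans (.symm ?_)
      simpa using hnext ((-m - 1 : ℤ) : ZMod k)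
  refine (connected_iff_exists_forall_reachable _).2 ⟨(0, 0), fun ⟨i, t⟩ => ?_⟩
  obtain ⟨m, rfl⟩ := ZMod.intCast_surjective i
  exact (hrim m).trans (hpath m t)

lemma reduced (hk : 3 ≤ k) : Reduced (sunGraph k) := by
  have h1 : (1 : ZMod k) ≠ 0 := by
    rw [← Nat.cast_one, ne_eq, ZMod.natCast_eq_zero_iff]
    exact Nat.not_dvd_of_pos_of_lt (by omega) (by omega)
  have h2 : (1 + 1 : ZMod k) ≠ 0 := by
    rw [one_add_one_eq_two, ← Nat.cast_two, ne_eq, ZMod.natCast_eq_zero_iff]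
    exact Nat.not_dvd_of_pos_of_lt (by omega) (by omega)
  rintro ⟨i, t⟩ y hN
  have hadj {w} (h : (sunGraph k).Adj (i, t) w) : (sunGraph k).Adj w y :=
    ((Set.ext_iff.1 hN w).1 h).symm
  have hback {w} (h : (sunGraph k).Adj w y) : (sunGraph k).Adj (i, t) w :=
    (Set.ext_iff.1 hN w).2 h.symm
  fin_cases t
  · rcases adj_one.1 (hadj (adj_zero.2 (.inl rfl))) with rfl | rfl | rfl
    · rfl
    · have := adj_one.1 (hadj (adj_zero.2 (.inr rfl)))
      simp_all [eq_sub_iff_add_eq, add_assoc]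
    · have := adj_one.1 (hadj (adj_zero.2 (.inr rfl)))
      simp_all [eq_sub_iff_add_eq]
  · rcases adj_two.1 (hadj (adj_one.2 (.inr (.inr rfl)))) with rfl | rfl
    · rfl
    · exact absurd (adj_three.1 (hadj (adj_one.2 (.inl rfl))).symm) (by simp)
  · exact (adj_three.1 (hadj (adj_two.2 (.inr rfl)))).symm
  · rcases adj_two.1 (hadj (adj_three.2 rfl)) with rfl | rfl
    · exact absurd (adj_three.1 (hback (adj_zero.2 (.inl rfl)))) (by simp)
    · rfl

end sunGraph

lemma two_mul_modEq_two_mul_iff {k : ℕ} {a b : ℤ} :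
    2 * a ≡ 2 * b [ZMOD (2 * k : ℕ)] ↔ (a : ZMod k) = b := by
  rw [ZMod.intCast_eq_intCast_iff, Nat.cast_mul]
  exact Int.ModEq.mul_left_cancel_iff' two_ne_zero

lemma not_two_mul_modEq_two_mul_add_one {k : ℕ} {a b : ℤ} :
    ¬ 2 * a ≡ 2 * b + 1 [ZMOD (2 * k : ℕ)] := fun h => by
  rw [Nat.cast_mul] at h
  have := h.of_mul_right
  rw [Int.ModEq] at this
  omega

namespace sunGraph

variable {k : ℕ}

/-- The vertices of the cycle of `sunGraph k`, in cyclic order. -/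
def rim (k : ℕ) (j : ℤ) : ZMod k × Fin 4 := ((j / 2 : ℤ), if Even j then 0 else 1)

lemma rim_two_mul (m : ℤ) : rim k (2 * m) = ((m : ZMod k), 0) := by simp [rim]

lemma rim_two_mul_add_one (m : ℤ) : rim k (2 * m + 1) = ((m : ZMod k), 1) := by
  have : (2 * m + 1) / 2 = m := by omega
  simp [rim, this]

lemma isRim (hk : 2 ≤ k) : IsRim (sunGraph k) (2 * k) (rim k) where
  three_le := by omega
  eq_iff i j := by
    obtain ⟨a, rfl | rfl⟩ := i.even_or_odd' <;> obtain ⟨b, rfl | rfl⟩ := j.even_or_odd' <;>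
      simp only [rim_two_mul, rim_two_mul_add_one, Prod.mk.injEq, and_true]
    · exact two_mul_modEq_two_mul_iff.symm
    · exact iff_of_false (by simp) not_two_mul_modEq_two_mul_add_one
    · exact iff_of_false (by simp) fun h => not_two_mul_modEq_two_mul_add_one h.symm
    · rw [← two_mul_modEq_two_mul_iff]
      exact ⟨Int.ModEq.add_right 1, Int.ModEq.add_right_cancel' 1⟩
  adj i := by
    obtain ⟨a, rfl | rfl⟩ := i.even_or_odd'
    · rw [rim_two_mul, rim_two_mul_add_one, adj_zero]
      exact .inl rfl
    · rw [rim_two_mul_add_one, show 2 * a + 1 + 1 = 2 * (a + 1) by ring, rim_two_mul, adj_one]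
      simp

lemma rim_eq_of_adj {i j : ℤ} (hij : (sunGraph k).Adj (rim k i) (rim k j)) :
    rim k j = rim k (i + 1) ∨ rim k j = rim k (i - 1) := by
  obtain ⟨a, rfl | rfl⟩ := i.even_or_odd'
  · rw [rim_two_mul, adj_zero] at hij
    rw [rim_two_mul_add_one, show 2 * a - 1 = 2 * (a - 1) + 1 by ring, rim_two_mul_add_one]
    simpa using hij
  · rw [rim_two_mul_add_one, adj_one] at hij
    rw [show 2 * a + 1 + 1 = 2 * (a + 1) by ring, rim_two_mul, add_sub_cancel_right, rim_two_mul]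
    rcases hij with hij | hij | hij
    · exact .inr hij
    · exact .inl (by simpa using hij)
    · rw [rim] at hij
      split_ifs at hij <;> simp at hij

lemma mem_range_rim_of_isCycle {w : ZMod k × Fin 4} {D : (sunGraph k).Walk w w}
    (hD : D.IsCycle) {a : ZMod k × Fin 4} (ha : a ∈ D.support) : a ∈ Set.range (rim k) := by
  obtain ⟨i, t⟩ := a
  obtain ⟨m, rfl⟩ := ZMod.intCast_surjective i
  have hthree {i : ZMod k} : (i, 3) ∉ D.support := fun h => by
    obtain ⟨y, z, hyz, hy, hz⟩ := exists_ne_mem_edges hD h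
    exact hyz ((adj_three.1 (D.adj_of_mem_edges hy)).trans
      (adj_three.1 (D.adj_of_mem_edges hz)).symm)
  have htwo {i : ZMod k} : (i, 2) ∉ D.support := fun h => by
    obtain ⟨y, z, hyz, hy, hz⟩ := exists_ne_mem_edges hD h
    have hne {w} (hw : s((i, 2), w) ∈ D.edges) : w = (i, 1) :=
      (adj_two.1 (D.adj_of_mem_edges hw)).resolve_right
        fun h3 => hthree (h3 ▸ D.snd_mem_support_of_mem_edges hw)
    exact hyz ((hne hy).trans (hne hz).symm)
  fin_cases t
  · exact ⟨2 * m, rim_two_mul m⟩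
  · exact ⟨2 * m + 1, rim_two_mul_add_one m⟩
  · exact (htwo ha).elim
  · exact (hthree ha).elim

lemma length_eq_of_isCycle (hk : 2 ≤ k) {w : ZMod k × Fin 4} {D : (sunGraph k).Walk w w}
    (hD : D.IsCycle) : D.length = 2 * k :=
  (isRim hk).length_eq (fun _ _ => rim_eq_of_adj) hD fun _ => mem_range_rim_of_isCycle hD

lemma girth (hk : 2 ≤ k) : (sunGraph k).girth = 2 * k :=
  girth_eq_of_forall_isCycle (isRim hk).not_isAcyclic fun _ _ => length_eq_of_isCycle hk

end sunGraph

/-- A path `v, x, y` leaving the vertex set `R` at `v`, such that `y` has degree `1` and `x` has no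
neighbor in `R` other than `v`. -/
structure IsRay (G : SimpleGraph V) (R : Set V) (v x y : V) : Prop where
  inner_notMem : x ∉ R
  outer_notMem : y ∉ R
  adj_inner : G.Adj v x
  adj_outer : G.Adj x y
  eq_of_outer : ∀ t, G.Adj y t → t = x
  eq_of_inner : ∀ u ∈ R, G.Adj x u → u = v

/-- The map from the vertices of `sunGraph k` determined by a closed cyclic sequence `c` and the
inner and outer vertices of the rays at its odd positions. -/
def sunMap {k : ℕ} (c : ℤ → V) (x y : ZMod k → V) (a : ZMod k × Fin 4) : V :=
  ![c (2 * a.1.cast), c (2 * a.1.cast + 1), x a.1, y a.1] a.2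

section SunMap

variable {k : ℕ} {c : ℤ → V} {x y : ZMod k → V} (h : IsRim G (2 * k) c)
include h

lemma sunMap_zero (m : ℤ) : sunMap c x y (m, 0) = c (2 * m) :=
  (h.eq_iff _ _).2 (two_mul_modEq_two_mul_iff.2 (by simp))

lemma sunMap_one (m : ℤ) : sunMap c x y (m, 1) = c (2 * m + 1) :=
  (h.eq_iff _ _).2 (.add_right 1 (two_mul_modEq_two_mul_iff.2 (by simp)))

lemma sunMap_rim (j : ℤ) : sunMap c x y (sunGraph.rim k j) = c j := by
  obtain ⟨m, rfl | rfl⟩ := j.even_or_odd'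
  · rw [sunGraph.rim_two_mul, sunMap_zero h]
  · rw [sunGraph.rim_two_mul_add_one, sunMap_one h]

variable (hray : ∀ m : ℤ, IsRay G (Set.range c) (c (2 * m + 1)) (x m) (y m))
include hray

lemma adj_sunMap {a b : ZMod k × Fin 4} (hab : (sunGraph k).Adj a b) :
    G.Adj (sunMap c x y a) (sunMap c x y b) := by
  suffices ∀ e ∈ (sunGraph k).edgeSet, e.map (sunMap c x y) ∈ G.edgeSet from this s(a, b) hab
  intro e he
  obtain ⟨i, hi⟩ := sunGraph.eq_of_mem_edgeSet he
  obtain ⟨m, rfl⟩ := ZMod.intCast_surjective i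
  rcases hi with rfl | rfl | rfl | rfl
  · rw [Sym2.map_mk, sunMap_one h, sunMap_zero h]
    exact (h.adj _).symm
  · have h1 := sunMap_zero h (x := x) (y := y) (m + 1)
    rw [Int.cast_add, Int.cast_one] at h1
    rw [Sym2.map_mk, sunMap_one h, h1, show 2 * (m + 1) = 2 * m + 1 + 1 by ring]
    exact h.adj _
  · rw [Sym2.map_mk, sunMap_one h]
    exact (hray m).adj_inner
  · exact (hray m).adj_outer

lemma injective_sunMap : Function.Injective (sunMap c x y) := by
  have heven {m n : ℤ} (hmn : c (2 * m) = c (2 * n)) : (m : ZMod k) = n :=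
    two_mul_modEq_two_mul_iff.1 ((h.eq_iff _ _).1 hmn)
  have hodd {m n : ℤ} (hmn : c (2 * m + 1) = c (2 * n + 1)) : (m : ZMod k) = n :=
    two_mul_modEq_two_mul_iff.1 (((h.eq_iff _ _).1 hmn).add_right_cancel' 1)
  have hparity (m n : ℤ) : c (2 * m) ≠ c (2 * n + 1) := fun hmn =>
    not_two_mul_modEq_two_mul_add_one ((h.eq_iff _ _).1 hmn)
  have hinner {m n : ℤ} (hmn : x m = x n) : (m : ZMod k) = n :=
    hodd ((hray n).eq_of_inner _ ⟨_, rfl⟩ (hmn ▸ (hray m).adj_inner.symm))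
  have houter {m n : ℤ} (hmn : y m = y n) : (m : ZMod k) = n :=
    hinner ((hray n).eq_of_outer _ (hmn ▸ (hray m).adj_outer.symm))
  have hrx (i m : ℤ) : c i ≠ x m := fun hi => (hray m).inner_notMem ⟨i, hi⟩
  have hry (i m : ℤ) : c i ≠ y m := fun hi => (hray m).outer_notMem ⟨i, hi⟩
  have hxy (m n : ℤ) : x m ≠ y n := fun hmn =>
    hrx _ n ((hray n).eq_of_outer _ (hmn ▸ (hray m).adj_inner.symm))
  have htwo (m : ℤ) : sunMap c x y (m, 2) = x m := rfl
  have hthree (m : ℤ) : sunMap c x y (m, 3) = y m := rfl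
  rintro ⟨i, t⟩ ⟨j, u⟩ hab
  obtain ⟨m, rfl⟩ := ZMod.intCast_surjective i
  obtain ⟨n, rfl⟩ := ZMod.intCast_surjective j
  have hzero (m : ℤ) := sunMap_zero h (x := x) (y := y) m
  have hone (m : ℤ) := sunMap_one h (x := x) (y := y) m
  fin_cases t <;> fin_cases u <;> grind

end SunMap

lemma IsRim.exists_forall_zmod {k : ℕ} {c : ℤ → V} (h : IsRim G (2 * k) c)
    {P : V → V → V → Prop} (hP : ∀ m : ℤ, ∃ x y, P (c (2 * m + 1)) x y) :
    ∃ x y : ZMod k → V, ∀ m : ℤ, P (c (2 * m + 1)) (x m) (y m) := by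
  choose x y hxy using hP
  refine ⟨fun i => x i.cast, fun i => y i.cast, fun m => ?_⟩
  have hm : c (2 * (m : ZMod k).cast + 1) = c (2 * m + 1) :=
    (h.eq_iff _ _).2 (.add_right 1 (two_mul_modEq_two_mul_iff.2 (by simp)))
  exact hm ▸ hxy _

lemma supp_connectedComponentMk_subset {S : Set V} {v : V} (hv : v ∈ S)
    (hS : ∀ a ∈ S, ∀ b, G.Adj a b → b ∈ S) : (G.connectedComponentMk v).supp ⊆ S := by
  intro w hw
  obtain ⟨p⟩ := (ConnectedComponent.exact hw).symm
  clear hw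
  induction p with
  | nil => exact hv
  | cons hadj _ ih => exact ih (hS _ hv _ hadj)

lemma nonempty_iso_of_lift [Nonempty W] (hG : G.Connected) (φ : Copy F G)
    (hlift : ∀ a w, G.Adj (φ a) w → ∃ b, F.Adj a b ∧ φ b = w) : Nonempty (F ≃g G) := by
  have hsurj : Function.Surjective φ := fun v => by
    have ⟨a⟩ := ‹Nonempty W›
    have hclosed : ∀ u ∈ Set.range φ, ∀ w, G.Adj u w → w ∈ Set.range φ := by
      rintro _ ⟨a, rfl⟩ w hw
      obtain ⟨b, -, hb⟩ := hlift a w hw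
      exact ⟨b, hb⟩
    exact supp_connectedComponentMk_subset (Set.mem_range_self a) hclosed
      (ConnectedComponent.sound (hG.preconnected v (φ a)))
  refine ⟨⟨.ofBijective φ ⟨φ.injective, hsurj⟩, fun {a b} => ⟨fun hab => ?_, φ.toHom.map_adj⟩⟩⟩
  obtain ⟨b', hb', hφ⟩ := hlift a _ hab
  rwa [← φ.injective hφ]

lemma typeI_iff {v : V} : TypeI G v ↔ ∀ w, ¬ G.Adj v w := by
  refine ⟨fun h w hw => ?_, fun h => ?_⟩
  · have hmem : w ∈ (G.connectedComponentMk v).supp :=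
      ConnectedComponent.mem_supp_of_adj_mem_supp _ ConnectedComponent.connectedComponentMk_mem hw
    rw [h] at hmem
    exact hw.ne hmem.symm
  · refine Set.Subset.antisymm (supp_connectedComponentMk_subset (S := {v}) rfl ?_) ?_
    · rintro a rfl b hb
      exact (h b hb).elim
    · rintro a rfl
      rfl

lemma typeII_iff {v : V} :
    TypeII G v ↔ ∃ x y, v ≠ y ∧ (∀ w, G.Adj v w ↔ w = x) ∧ (∀ w, G.Adj x w ↔ w = v ∨ w = y) ∧
      ∀ w, G.Adj y w ↔ w = x := by
  constructor
  · rintro ⟨x, y, hxy, hvx, hvy, hsupp, hadj_vx, hadj_xy, hadj_vy⟩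
    have hmem {a w} (ha : a ∈ ({v, x, y} : Set V)) (haw : G.Adj a w) : w ∈ ({v, x, y} : Set V) := by
      rw [← hsupp] at ha ⊢
      exact ConnectedComponent.mem_supp_of_adj_mem_supp _ ha haw
    refine ⟨x, y, hvy, fun w => ⟨fun hw => ?_, ?_⟩, fun w => ⟨fun hw => ?_, ?_⟩,
      fun w => ⟨fun hw => ?_, ?_⟩⟩
    · rcases hmem (by simp) hw with rfl | rfl | rfl <;> simp_all
    · rintro rfl
      exact hadj_vx
    · rcases hmem (by simp) hw with rfl | rfl | rfl <;> simp_all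
    · rintro (rfl | rfl)
      exacts [hadj_vx.symm, hadj_xy]
    · rcases hmem (by simp) hw with rfl | rfl | rfl <;> simp_all [G.adj_comm]
    · rintro rfl
      exact hadj_xy.symm
  · rintro ⟨x, y, hvy, hv, hx, hy⟩
    have hvx : G.Adj v x := (hv x).2 rfl
    have hxy : G.Adj x y := (hx y).2 (.inr rfl)
    refine ⟨x, y, hxy.ne, hvx.ne, hvy, ?_, hvx, hxy, fun h => hxy.ne ((hv y).1 h).symm⟩
    refine (supp_connectedComponentMk_subset (by simp) ?_).antisymm ?_
    · rintro a (rfl | rfl | rfl) b hb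
      · exact .inr (.inl ((hv b).1 hb))
      · rcases (hx b).1 hb with rfl | rfl <;> simp
      · exact .inr (.inl ((hy b).1 hb))
    · rintro a (rfl | rfl | rfl)
      · rfl
      · exact ConnectedComponent.sound hvx.symm.reachable
      · exact ConnectedComponent.sound (hxy.symm.reachable.trans hvx.symm.reachable)

lemma TypeI.map (φ : F ≃g G) {v : W} (h : TypeI F v) : TypeI G (φ v) := by
  rw [typeI_iff] at h ⊢
  simpa only [φ.surjective.forall, φ.map_adj_iff] using h

lemma TypeII.map (φ : F ≃g G) {v : W} (h : TypeII F v) : TypeII G (φ v) := by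
  rw [typeII_iff] at h ⊢
  obtain ⟨x, y, h⟩ := h
  refine ⟨φ x, φ y, ?_⟩
  simpa only [φ.surjective.forall, φ.map_adj_iff, ne_eq, φ.injective.eq_iff] using h

lemma Reduced.of_iso (φ : F ≃g G) (hF : Reduced F) : Reduced G := by
  intro x y hN
  refine φ.symm.injective (hF _ _ (Set.ext fun w => ?_))
  rw [mem_neighborSet, mem_neighborSet, ← φ.map_adj_iff, ← φ.map_adj_iff, φ.apply_symm_apply,
    φ.apply_symm_apply]
  exact Set.ext_iff.1 hN (φ w)

/-- `G` is a reduced unicyclic graph of even girth at least `10` such that the trees attached to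
its cycle are alternately of Type (i) and of Type (ii). -/
def IsAlternatingUnicyclic (G : SimpleGraph V) : Prop :=
  Reduced G ∧ G.Connected ∧
    ∃ g : ℕ, 10 ≤ g ∧ Even g ∧ G.girth = g ∧
      ∃ (v : V) (C : G.Walk v v), C.IsCycle ∧ C.length = g ∧
        (∀ (w : V) (D : G.Walk w w), D.IsCycle → ∀ e, e ∈ D.edges ↔ e ∈ C.edges) ∧
        ∀ i < g,
          (TypeI (G.deleteEdges {e | e ∈ C.edges}) (C.getVert i) ∧
            TypeII (G.deleteEdges {e | e ∈ C.edges}) (C.getVert (i + 1))) ∨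
          (TypeII (G.deleteEdges {e | e ∈ C.edges}) (C.getVert i) ∧
            TypeI (G.deleteEdges {e | e ∈ C.edges}) (C.getVert (i + 1)))

lemma IsAlternatingUnicyclic.of_iso (φ : F ≃g G) (hF : IsAlternatingUnicyclic F) :
    IsAlternatingUnicyclic G := by
  obtain ⟨hred, hconn, g, hg, heven, hgirth, v, C, hC, hlen, hunique, htype⟩ := hF
  have hmem (e : Sym2 W) : e.map φ ∈ (C.map φ.toHom).edges ↔ e ∈ C.edges := by
    rw [Walk.edges_map]
    exact List.mem_map_of_injective (Sym2.map.injective φ.injective)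
  let ψ : F.deleteEdges {e | e ∈ C.edges} ≃g G.deleteEdges {e | e ∈ (C.map φ.toHom).edges} :=
    ⟨φ.toEquiv, fun {a b} => by
      rw [deleteEdges_adj, deleteEdges_adj]
      exact and_congr φ.map_adj_iff (not_congr (hmem s(a, b)))⟩
  refine ⟨hred.of_iso φ, φ.connected_iff.1 hconn, g, hg, heven, φ.girth_eq ▸ hgirth, φ v,
    C.map φ.toHom, hC.map φ.injective, by simpa using hlen, fun w D hD e => ?_, fun i hi => ?_⟩
  · have hsymm : (e.map φ.symm).map φ = e := by
      rw [Sym2.map_map, φ.self_comp_symm, Sym2.map_id, id]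
    rw [← hsymm, hmem, ← hunique _ _ (hD.map (f := φ.symm.toHom) φ.symm.injective),
      Walk.edges_map, hsymm]
    exact (List.mem_map_of_injective (Sym2.map.injective φ.symm.injective)).symm
  · rw [Walk.getVert_map, Walk.getVert_map]
    exact (htype i hi).imp (.imp (.map ψ) (.map ψ)) (.imp (.map ψ) (.map ψ))

/-- The edges of the closed cyclic sequence `c`. -/
def rimEdges (c : ℤ → V) : Set (Sym2 V) := {e | ∃ i, e = s(c i, c (i + 1))}

lemma rimEdges_shift (c : ℤ → V) (s : ℤ) : rimEdges (fun i => c (s + i)) = rimEdges c := by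
  ext e
  simp only [rimEdges, Set.mem_ofPred_eq, ← add_assoc]
  exact ((Equiv.addLeft s).surjective.exists (p := fun i => e = s(c i, c (i + 1)))).symm

namespace sunGraph

variable {k : ℕ} {i : ZMod k} {w : ZMod k × Fin 4}

lemma mem_rimEdges_iff {e : Sym2 (ZMod k × Fin 4)} :
    e ∈ rimEdges (rim k) ↔ ∃ i, e = s((i, 0), (i, 1)) ∨ e = s((i, 1), (i + 1, 0)) := by
  constructor
  · rintro ⟨j, rfl⟩
    obtain ⟨m, rfl | rfl⟩ := j.even_or_odd'
    · exact ⟨m, by simp [rim_two_mul, rim_two_mul_add_one]⟩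
    · rw [show 2 * m + 1 + 1 = 2 * (m + 1) by ring]
      exact ⟨m, by simp [rim_two_mul, rim_two_mul_add_one]⟩
  · rintro ⟨i, hi⟩
    obtain ⟨m, rfl⟩ := ZMod.intCast_surjective i
    rcases hi with rfl | rfl
    · exact ⟨2 * m, by rw [rim_two_mul, rim_two_mul_add_one]⟩
    · refine ⟨2 * m + 1, ?_⟩
      rw [show 2 * m + 1 + 1 = 2 * (m + 1) by ring, rim_two_mul, rim_two_mul_add_one]
      simp

lemma typeI_zero : TypeI ((sunGraph k).deleteEdges (rimEdges (rim k))) (i, 0) := by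
  refine typeI_iff.2 fun w hw => ?_
  rw [deleteEdges_adj, adj_zero, mem_rimEdges_iff] at hw
  obtain ⟨rfl | rfl, hne⟩ := hw
  · exact hne ⟨i, .inl rfl⟩
  · exact hne ⟨i - 1, .inr (by simp)⟩

lemma typeII_one : TypeII ((sunGraph k).deleteEdges (rimEdges (rim k))) (i, 1) := by
  refine typeII_iff.2 ⟨(i, 2), (i, 3), by simp, fun w => ?_, fun w => ?_, fun w => ?_⟩ <;>
    rw [deleteEdges_adj, mem_rimEdges_iff]
  · rw [adj_one]
    constructor
    · rintro ⟨rfl | rfl | rfl, hne⟩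
      · exact (hne ⟨i, .inl Sym2.eq_swap⟩).elim
      · exact (hne ⟨i, .inr rfl⟩).elim
      · rfl
    · rintro rfl
      simp
  · rw [adj_two]
    exact and_iff_left (by simp)
  · rw [adj_three]
    exact and_iff_left (by simp)

lemma isAlternatingUnicyclic (hk : 5 ≤ k) : IsAlternatingUnicyclic (sunGraph k) := by
  have h := isRim (k := k) (by omega)
  obtain ⟨v, C, hC, hlen, -⟩ := h.exists_isCycle
  have hedges {w} {D : (sunGraph k).Walk w w} (hD : D.IsCycle) (e) :
      e ∈ D.edges ↔ e ∈ rimEdges (rim k) :=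
    mem_edges_iff_of_support_subset_range (fun _ _ => rim_eq_of_adj) hD
      (fun _ => mem_range_rim_of_isCycle hD) e
  refine ⟨reduced (by omega), connected k, 2 * k, by omega, even_two_mul k, girth (by omega), v, C,
    hC, hlen, fun w D hD e => (hedges hD e).trans (hedges hC e).symm, fun i hi => ?_⟩
  have hS : {e | e ∈ C.edges} = rimEdges (rim k) := Set.ext (hedges hC)
  rw [hS]
  have hi : s(C.getVert i, C.getVert (i + 1)) ∈ rimEdges (rim k) :=
    (hedges hC _).1 (Walk.adj_toSubgraph_iff_mem_edges.1 (C.toSubgraph_adj_getVert (by omega)))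
  obtain ⟨j, hj | hj⟩ := mem_rimEdges_iff.1 hi <;>
    rcases Sym2.eq_iff.1 hj with ⟨h₁, h₂⟩ | ⟨h₁, h₂⟩ <;> rw [h₁, h₂]
  · exact .inl ⟨typeI_zero, typeII_one⟩
  · exact .inr ⟨typeII_one, typeI_zero⟩
  · exact .inr ⟨typeII_one, typeI_zero⟩
  · exact .inl ⟨typeI_zero, typeII_one⟩

end sunGraph

lemma exists_forall_two_mul_of_alternating {p q : ℤ → Prop} (hpq : ∀ i, p i → ¬ q i)
    (h : ∀ i, p i ∧ q (i + 1) ∨ q i ∧ p (i + 1)) :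
    ∃ s, ∀ m, p (s + 2 * m) ∧ q (s + (2 * m + 1)) := by
  obtain ⟨s, hs⟩ : ∃ s, p s := (h 0).elim (fun h0 => ⟨0, h0.1⟩) fun h0 => ⟨0 + 1, h0.2⟩
  have hq {i} (hi : p i) : q (i + 1) := by grind
  have hp {i} : p i ↔ p (i + 2) := by grind
  have hall (m : ℤ) : p (s + 2 * m) := by
    induction m using Int.induction_on with
    | zero => simpa using hs
    | succ m ih => exact (show s + 2 * (m : ℤ) + 2 = s + 2 * (m + 1) by ring) ▸ hp.1 ih
    | pred m ih =>
      exact hp.2 ((show s + 2 * (-(m : ℤ)) = s + 2 * (-m - 1) + 2 by ring) ▸ ih)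
  exact ⟨s, fun m => ⟨hall m, (show s + 2 * m + 1 = s + (2 * m + 1) by ring) ▸ hq (hall m)⟩⟩

namespace IsRim

variable {n : ℕ} {c : ℤ → V} (h : IsRim G n c) (hgirth : G.girth = n)
include h hgirth

lemma mem_range_of_notMem_rimEdges {i : ℤ} {w : V} (hw : G.Adj (c i) w)
    (he : s(c i, w) ∉ rimEdges c) : w ∉ Set.range c := by
  rintro ⟨j, rfl⟩
  rcases h.eq_of_adj hgirth hw with hj | hj
  · exact he ⟨i, by rw [hj]⟩
  · exact he ⟨i - 1, by rw [hj, sub_add_cancel, Sym2.eq_swap]⟩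

lemma exists_isRay_of_typeII (hn : 9 ≤ n) {i : ℤ}
    (hi : TypeII (G.deleteEdges (rimEdges c)) (c i)) :
    ∃ x y, IsRay G (Set.range c) (c i) x y ∧ (∀ w, G.Adj (c i) w → w ∈ Set.range c ∨ w = x) ∧
      ∀ w, G.Adj x w → w = c i ∨ w = y := by
  obtain ⟨x, y, hvy, hv, hx, hy⟩ := typeII_iff.1 hi
  simp only [deleteEdges_adj] at hv hx hy
  have hvx := (hv x).2 rfl
  have hxy := (hx y).2 (.inr rfl)
  have hxR : x ∉ Set.range c := h.mem_range_of_notMem_rimEdges hgirth hvx.1 hvx.2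
  have hyR : y ∉ Set.range c := by
    rintro ⟨j, rfl⟩
    have := (h.support_of_isPath hgirth hn hxR hvx.1 (Path.singleton hxy.1).2
      (by simp [Path.singleton])).1
    simp [Path.singleton, hvx.1.ne, hvy] at this
  have hoff {u w} (hu : u ∉ Set.range c) : s(u, w) ∉ rimEdges c := by
    rintro ⟨j, hj⟩
    rcases Sym2.eq_iff.1 hj with ⟨rfl, -⟩ | ⟨rfl, -⟩
    exacts [hu ⟨_, rfl⟩, hu ⟨_, rfl⟩]
  have hxw (w) (hw : G.Adj x w) : w = c i ∨ w = y := (hx w).1 ⟨hw, hoff hxR⟩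
  refine ⟨x, y, ⟨hxR, hyR, hvx.1, hxy.1, fun t ht => (hy t).1 ⟨ht, hoff hyR⟩, ?_⟩,
    fun w hw => or_iff_not_imp_left.2 fun hwR => (hv w).1 ⟨hw, Sym2.eq_swap ▸ hoff hwR⟩, hxw⟩
  rintro _ hu hxu
  exact (hxw _ hxu).resolve_right fun huy => hyR (huy ▸ hu)

end IsRim

/-- A rim `c` of length `2 * k`, whose rays at the odd positions are given by `x` and `y`, yields a
copy of `sunGraph k`. -/
def sunCopy {k : ℕ} {c : ℤ → V} {x y : ZMod k → V} (h : IsRim G (2 * k) c)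
    (hray : ∀ m : ℤ, IsRay G (Set.range c) (c (2 * m + 1)) (x m) (y m)) : Copy (sunGraph k) G :=
  ⟨⟨sunMap c x y, adj_sunMap h hray⟩, injective_sunMap h hray⟩

lemma IsRim.nonempty_sunGraph_iso {k : ℕ} {c : ℤ → V} (h : IsRim G (2 * k) c)
    (hgirth : G.girth = 2 * k) (hk : 5 ≤ k) (hG : G.Connected)
    (heven : ∀ m, TypeI (G.deleteEdges (rimEdges c)) (c (2 * m)))
    (hodd : ∀ m, TypeII (G.deleteEdges (rimEdges c)) (c (2 * m + 1))) :
    Nonempty (sunGraph k ≃g G) := by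
  obtain ⟨x, y, hxy⟩ := h.exists_forall_zmod
    (P := fun v x y => IsRay G (Set.range c) v x y ∧
      (∀ w, G.Adj v w → w ∈ Set.range c ∨ w = x) ∧ ∀ w, G.Adj x w → w = v ∨ w = y)
    fun m => h.exists_isRay_of_typeII hgirth (by omega) (hodd m)
  have hlift {j : ℤ} {w : V} (hjw : G.Adj (c j) w) (hw : w ∈ Set.range c) :
      ∃ b, (sunGraph k).Adj (sunGraph.rim k j) b ∧ sunMap c x y b = w := by
    have hrim := sunGraph.isRim (k := k) (by omega)
    obtain ⟨i, rfl⟩ := hw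
    rcases h.eq_of_adj hgirth hjw with hi | hi <;> rw [hi, ← sunMap_rim h (x := x) (y := y)]
    exacts [⟨_, hrim.adj j, rfl⟩, ⟨_, hrim.adj_sub_one j, rfl⟩]
  refine nonempty_iso_of_lift hG (sunCopy h fun m => (hxy m).1) fun a w haw => ?_
  change G.Adj (sunMap c x y a) w at haw
  change ∃ b, _ ∧ sunMap c x y b = w
  obtain ⟨i, t⟩ := a
  obtain ⟨m, rfl⟩ := ZMod.intCast_surjective i
  obtain ⟨hray, hcw, hxw⟩ := hxy m
  fin_cases t
  · replace haw : G.Adj (c (2 * m)) w := sunMap_zero h (x := x) (y := y) m ▸ haw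
    refine sunGraph.rim_two_mul (k := k) m ▸ hlift haw ?_
    by_contra hw
    refine typeI_iff.1 (heven m) w ((deleteEdges_adj ..).2 ⟨haw, ?_⟩)
    rintro ⟨j, hj⟩
    grind
  · replace haw : G.Adj (c (2 * m + 1)) w := sunMap_one h (x := x) (y := y) m ▸ haw
    rcases hcw w haw with hw | rfl
    · exact sunGraph.rim_two_mul_add_one m ▸ hlift haw hw
    · exact ⟨(m, 2), sunGraph.adj_one.2 (by simp), rfl⟩
  · rcases hxw w haw with rfl | rfl
    · exact ⟨(m, 1), sunGraph.adj_two.2 (by simp), sunMap_one h m⟩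
    · exact ⟨(m, 3), sunGraph.adj_two.2 (by simp), rfl⟩
  · exact ⟨(m, 2), sunGraph.adj_three.2 rfl, (hray.eq_of_outer w haw).symm⟩

lemma TypeI.not_typeII {v : V} (hv : TypeI G v) : ¬ TypeII G v := fun ⟨x, _, _, _, _, _, hx, _⟩ =>
  typeI_iff.1 hv x hx

lemma IsAlternatingUnicyclic.exists_sunGraph_iso (hG : IsAlternatingUnicyclic G) :
    ∃ k, 5 ≤ k ∧ Nonempty (sunGraph k ≃g G) := by
  obtain ⟨-, hconn, g, hg, heven, hgirth, v, C, hC, hlen, -, htype⟩ := hG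
  obtain ⟨k, rfl⟩ := even_iff_exists_two_mul.1 heven
  have h := isRim_cyclicGetVert hC
  rw [hlen] at h
  have hS : {e | e ∈ C.edges} = rimEdges (cyclicGetVert C) :=
    Set.ext <| mem_edges_iff_of_support_subset_range (fun i j => h.eq_of_adj hgirth) hC
      fun x hx => by
        obtain ⟨i, rfl, hi⟩ := Walk.mem_support_iff_exists_getVert.1 hx
        exact ⟨i, cyclicGetVert_natCast C hi⟩
  rw [hS] at htype
  obtain ⟨s, hs⟩ := exists_forall_two_mul_of_alternating
    (p := fun i => TypeI (G.deleteEdges (rimEdges (cyclicGetVert C))) (cyclicGetVert C i))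
    (q := fun i => TypeII (G.deleteEdges (rimEdges (cyclicGetVert C))) (cyclicGetVert C i))
    (fun i => TypeI.not_typeII) fun i => by
      obtain ⟨m, hm, hmi⟩ := exists_natCast_modEq (n := 2 * k) (by omega) i
      rw [← (h.eq_iff _ _).2 hmi, ← (h.eq_iff _ _).2 (hmi.add_right 1),
        cyclicGetVert_natCast C (by omega)]
      have := cyclicGetVert_natCast C (i := m + 1) (by omega)
      push_cast at this
      exact this ▸ htype m hm
  exact ⟨k, by omega, (h.shift s).nonempty_sunGraph_iso hgirth (by omega) hconn
    (fun m => by simpa only [rimEdges_shift] using (hs m).1)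
    fun m => by simpa only [rimEdges_shift] using (hs m).2⟩

lemma IsShallowRim.exists_isRay_of_tip {n : ℕ} {c : ℤ → V} (h : IsShallowRim G n c) {i : ℤ}
    (hi : Occupied G c (2 * i) 0) : ∃ x y, IsRay G (Set.range c) (c i) x y := by
  generalize hp : 2 * i = p at hi
  obtain ⟨e, he⟩ := hi
  cases he with
  | @tip j x y hx hjx hxy hy =>
    obtain rfl : i = j := by omega
    refine ⟨x, y, hx, (h.leaf i x y hx hjx hxy hy).1, hjx, hxy,
      fun t ht => h.eq_of_outer hx hjx hxy hy ht, ?_⟩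
    rintro _ ⟨m, rfl⟩ hxm
    exact h.eq_of_inner hx hjx hxm.symm

/-! ### Classification -/

namespace IsMinimalWellIndumatched

variable [Finite V] (hG : IsMinimalWellIndumatched G)
include hG

lemma nonempty_cycleGraph_iso {c : ℤ → V} (h : IsShallowRim G G.girth c)
    (htip : ∀ p, ¬ Occupied G c p 0) : Nonempty (cycleGraph 11 ≃g G) := by
  have hgirth : G.girth = 11 := le_antisymm (h.le_eleven hG.1 htip) (h.eleven_le hG.1 htip)
  obtain ⟨v, C, hC, hlen, -⟩ := h.exists_isCycle
  obtain ⟨φ⟩ := (cycleGraph_isContained_iff (by norm_num)).2 ⟨v, C, hC, hlen.trans hgirth⟩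
  exact hG.nonempty_iso φ wellIndumatched_cycleGraph_eleven
    fun hac => hac _ cycleGraph.isCycle_cycle

lemma exists_sunGraph_iso {c : ℤ → V} (h : IsShallowRim G G.girth c) {p : ℤ}
    (hp : Occupied G c p 0) : ∃ k, 5 ≤ k ∧ Nonempty (sunGraph k ≃g G) := by
  obtain ⟨k, hk⟩ := even_iff_exists_two_mul.1 (h.even_of_tip hG.1 hp)
  obtain ⟨i, rfl⟩ : ∃ i, p = 2 * i := ⟨p / 2, by have := hp.reach_cases; omega⟩
  have h9 := h.nine_le
  have hrim : IsRim G (2 * k) fun j => c (i - 1 + j) := hk ▸ h.toIsRim.shift (i - 1)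
  have hrange : Set.range (fun j => c (i - 1 + j)) = Set.range c :=
    (Equiv.addLeft (i - 1)).surjective.range_comp c
  obtain ⟨x, y, hxy⟩ := hrim.exists_forall_zmod (P := IsRay G (Set.range c)) fun m => by
    have htip := h.tip_add_four_mul hG.1 hp m
    rw [show 2 * i + 4 * m = 2 * (i - 1 + (2 * m + 1)) by ring] at htip
    exact h.exists_isRay_of_tip htip
  exact ⟨k, by omega, hG.nonempty_iso (sunCopy hrim (hrange.symm ▸ hxy))
    (sunGraph.wellIndumatched) (sunGraph.isRim (by omega)).not_isAcyclic⟩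

lemma nonempty_cycleGraph_iso_or_exists_sunGraph_iso :
    Nonempty (cycleGraph 11 ≃g G) ∨ ∃ k, 5 ≤ k ∧ Nonempty (sunGraph k ≃g G) := by
  obtain ⟨c, h⟩ := hG.exists_isShallowRim
  by_cases! htip : ∀ p, ¬ Occupied G c p 0
  · exact .inl (hG.nonempty_cycleGraph_iso h htip)
  · obtain ⟨p, hp⟩ := htip
    exact .inr (hG.exists_sunGraph_iso h hp)

end IsMinimalWellIndumatched

lemma subgraph_eq_top_of_iso [Finite V] {H : G.Subgraph} (φ : G ≃g H.coe) : H = ⊤ := by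
  have hverts : H.verts = Set.univ := by
    refine Set.eq_of_subset_of_ncard_le (Set.subset_univ _) ?_
    rw [Set.ncard_univ, ← Nat.card_coe_set_eq, Nat.card_congr φ.toEquiv]
  let f : G →g G := H.hom.comp φ.toHom
  have hmem (e : G.edgeSet) : (f.mapEdgeSet e : Sym2 V) ∈ H.edgeSet := by
    obtain ⟨e, he⟩ := e
    induction e with
    | _ u v => exact φ.map_adj_iff.2 he
  have hf : Function.Surjective f.mapEdgeSet := Finite.surjective_of_injective <|
    Hom.mapEdgeSet.injective f (H.hom_injective.comp φ.injective)
  refine Subgraph.ext hverts (funext₂ fun a b => propext ⟨Subgraph.Adj.adj_sub, fun hab => ?_⟩)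
  obtain ⟨e, he⟩ := hf ⟨s(a, b), hab⟩
  have hfe := hmem e
  rwa [he] at hfe

lemma exists_le_isMinimalWellIndumatched_coe [Finite V] {H : G.Subgraph}
    (hH : WellIndumatched H.coe) (hgirth : 9 ≤ H.coe.girth) :
    ∃ K ≤ H, IsMinimalWellIndumatched K.coe := by
  obtain ⟨K, hKH, hK⟩ := exists_minimal_le_of_wellFoundedLT
    (fun K : G.Subgraph => WellIndumatched K.coe ∧ 9 ≤ K.coe.girth) H ⟨hH, hgirth⟩
  refine ⟨K, hKH, hK.prop.1, hK.prop.2, fun L hL ⟨hLwi, hLgirth⟩ => hL ?_⟩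
  have φ : L.coe ≃g (Subgraph.coeSubgraph L).coe :=
    Copy.isoSubgraphMap ⟨K.hom, K.hom_injective⟩ L
  have hle := hK.le_of_le ⟨hLwi.of_iso φ.symm, φ.girth_eq ▸ hLgirth⟩ (Subgraph.coeSubgraph_le L)
  exact Subgraph.coeSubgraph_injective K <|
    ((Subgraph.coeSubgraph_le L).antisymm hle).trans K.map_hom_top.symm

lemma isMinimalWellIndumatched_of_iso [Finite V] {n : ℕ} (φ : F ≃g G) (hF : WellIndumatched F)
    (hn : 9 ≤ n) (hac : ¬ F.IsAcyclic) (hlen : ∀ v (C : F.Walk v v), C.IsCycle → C.length = n)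
    (hiso : ∀ H : G.Subgraph, IsMinimalWellIndumatched H.coe → H.coe.girth = n →
      Nonempty (F ≃g H.coe)) : IsMinimalWellIndumatched G := by
  have : Finite W := Finite.of_injective φ φ.injective
  refine ⟨hF.of_iso φ.symm, φ.girth_eq ▸ girth_eq_of_forall_isCycle hac hlen ▸ hn,
    fun H hH ⟨hHwi, hHgirth⟩ => hH ?_⟩
  obtain ⟨K, hKH, hK⟩ := exists_le_isMinimalWellIndumatched_coe hHwi hHgirth
  have hKgirth : K.coe.girth = n :=
    girth_eq_of_forall_isCycle (not_isAcyclic_of_le_girth (by norm_num) hK.2.1) fun v C hC => by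
      let ψ : K.coe →g F := φ.symm.toHom.comp K.hom
      have hψ : Function.Injective ψ := φ.symm.injective.comp K.hom_injective
      simpa using hlen _ (C.map ψ) (hC.map hψ)
  obtain ⟨ψ⟩ := hiso K hK hKgirth
  exact top_le_iff.1 (subgraph_eq_top_of_iso (φ.symm.trans ψ) ▸ hKH)

lemma isMinimalWellIndumatched_of_cycleGraph_iso [Finite V] (φ : cycleGraph 11 ≃g G) :
    IsMinimalWellIndumatched G := by
  refine isMinimalWellIndumatched_of_iso φ wellIndumatched_cycleGraph_eleven (by norm_num)
    (fun hac => hac _ cycleGraph.isCycle_cycle) (fun _ _ => length_eq_of_isCycle_cycleGraph)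
    fun H hH hgirth => ?_
  obtain hiso | ⟨k, hk, ⟨ψ⟩⟩ := hH.nonempty_cycleGraph_iso_or_exists_sunGraph_iso
  · exact hiso
  · rw [← ψ.girth_eq, sunGraph.girth (by omega)] at hgirth
    omega

lemma isMinimalWellIndumatched_of_sunGraph_iso [Finite V] {k : ℕ} (hk : 5 ≤ k)
    (φ : sunGraph k ≃g G) : IsMinimalWellIndumatched G := by
  refine isMinimalWellIndumatched_of_iso φ sunGraph.wellIndumatched (n := 2 * k) (by omega)
    (sunGraph.isRim (by omega)).not_isAcyclic
    (fun _ _ => sunGraph.length_eq_of_isCycle (by omega)) fun H hH hgirth => ?_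
  obtain ⟨⟨ψ⟩⟩ | ⟨l, hl, ⟨ψ⟩⟩ := hH.nonempty_cycleGraph_iso_or_exists_sunGraph_iso
  · rw [← ψ.girth_eq, girth_cycleGraph] at hgirth
    omega
  · rw [← ψ.girth_eq, sunGraph.girth (by omega)] at hgirth
    obtain rfl : l = k := by omega
    exact ⟨ψ⟩

theorem isMinimalWellIndumatched_iff [Finite V] :
    IsMinimalWellIndumatched G ↔
      Nonempty (G ≃g cycleGraph 11) ∨ ∃ k, 5 ≤ k ∧ Nonempty (sunGraph k ≃g G) := by
  refine ⟨fun hG => ?_, ?_⟩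
  · exact hG.nonempty_cycleGraph_iso_or_exists_sunGraph_iso.imp_left (Nonempty.map Iso.symm)
  · rintro (⟨⟨φ⟩⟩ | ⟨k, hk, ⟨φ⟩⟩)
    · exact isMinimalWellIndumatched_of_cycleGraph_iso φ.symm
    · exact isMinimalWellIndumatched_of_sunGraph_iso hk φ

theorem isAlternatingUnicyclic_iff :
    IsAlternatingUnicyclic G ↔ ∃ k, 5 ≤ k ∧ Nonempty (sunGraph k ≃g G) :=
  ⟨IsAlternatingUnicyclic.exists_sunGraph_iso,
    fun ⟨_, hk, ⟨φ⟩⟩ => (sunGraph.isAlternatingUnicyclic hk).of_iso φ⟩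

end

/-- Characterization of minimal well-indumatched graphs of girth at least `9`:
`G` is well-indumatched of girth at least `9` with no proper subgraph that is
well-indumatched of girth at least `9`, if and only if either `G` is the cycle `C₁₁`,
or `G` is a reduced unicyclic graph of even girth `g ≥ 10` whose unique cycle
`C = v₁ ⋯ v_g v₁` has its rooted trees `T_{v_i}` alternately of Type (i) and
Type (ii) around the cycle. -/
theorem stmt_15 {V : Type*} [Fintype V] (G : SimpleGraph V) :
    (WellIndumatched G ∧ 9 ≤ G.girth ∧
      ∀ H : G.Subgraph, H ≠ ⊤ → ¬ (WellIndumatched H.coe ∧ 9 ≤ H.coe.girth)) ↔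
    (Nonempty (G ≃g SimpleGraph.cycleGraph 11) ∨
      (Reduced G ∧ G.Connected ∧
        ∃ g : ℕ, 10 ≤ g ∧ Even g ∧ G.girth = g ∧
          ∃ (v : V) (C : G.Walk v v), C.IsCycle ∧ C.length = g ∧
            (∀ (w : V) (D : G.Walk w w), D.IsCycle → ∀ e, e ∈ D.edges ↔ e ∈ C.edges) ∧
            ∀ i < g,
              (TypeI (G.deleteEdges {e | e ∈ C.edges}) (C.getVert i) ∧
                TypeII (G.deleteEdges {e | e ∈ C.edges}) (C.getVert (i + 1))) ∨
              (TypeII (G.deleteEdges {e | e ∈ C.edges}) (C.getVert i) ∧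
                TypeI (G.deleteEdges {e | e ∈ C.edges}) (C.getVert (i + 1))))) :=
  isMinimalWellIndumatched_iff.trans (or_congr_right isAlternatingUnicyclic_iff.symm)
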